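/- In X_6' (k = 6), for the class d = 4[L] − Σ_{i=1}^6 [E_i] (so a = 4, bᵢ = 1 for all i, and d·[E] = 2), the refined count of d-marked floor diagrams of genus 0 and type ((1),(1)) is N_q^{(1),(1)}(X_6',4[L]−Σ[E_i],0) = [2]_q⁴ + [4]_q² + 10[3]_q² + 64[2]_q² + 196. -/

import Mathlib

open LaurentPolynomial

open scoped Classical

noncomputable section FloorDiagrams

/-- The quantum integer `[n]_q = q^{−(n−1)/2} + q^{−(n−3)/2} + ⋯ + q^{(n−1)/2}`,
as a Laurent polynomial in the variable `t = q^{1/2}` (here `T m` denotes `t^m`). -/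
def qInt (n : ℕ) : LaurentPolynomial ℚ :=
  ∑ j ∈ Finset.range n, T (2 * (j : ℤ) - ((n : ℤ) - 1))

/-- A finite weighted oriented (multi)graph: `nV` vertices, `nE` edges, each edge `e`
having a source `src e`, a target `tgt e` and a positive integer weight `w e`. -/
structure WOGraph where
  nV : ℕ
  nE : ℕ
  src : Fin nE → Fin nV
  tgt : Fin nE → Fin nV
  w : Fin nE → ℕ
  w_pos : ∀ e, 0 < w e

namespace WOGraph

variable (G : WOGraph)

/-- The edge `e` is adjacent to the vertex `v`. -/
def Adj (e : Fin G.nE) (v : Fin G.nV) : Prop :=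
  G.src e = v ∨ G.tgt e = v

/-- One step of the (unoriented) adjacency relation between vertices. -/
def connStep (u v : Fin G.nV) : Prop :=
  ∃ e, (G.src e = u ∧ G.tgt e = v) ∨ (G.src e = v ∧ G.tgt e = u)

/-- The graph is connected. -/
def Connected : Prop :=
  0 < G.nV ∧ ∀ u v, Relation.ReflTransGen G.connStep u v

/-- One step of the oriented relation between vertices. -/
def dirStep (u v : Fin G.nV) : Prop :=
  ∃ e, G.src e = u ∧ G.tgt e = v

/-- The oriented graph is acyclic: there is no non-trivial oriented cycle. -/
def Acyclic : Prop :=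
  ∀ v, ¬ Relation.TransGen G.dirStep v v

/-- The number of edges adjacent to a vertex (with multiplicity). -/
def degree (v : Fin G.nV) : ℕ :=
  (Finset.univ.filter fun e => G.src e = v).card +
    (Finset.univ.filter fun e => G.tgt e = v).card

/-- A leaf is a vertex adjacent to exactly one edge. -/
def IsLeaf (v : Fin G.nV) : Prop := G.degree v = 1

/-- `Vert^∞(G)`: leaves all of whose adjacent edges are outgoing. -/
def InfVert (v : Fin G.nV) : Prop :=
  G.IsLeaf v ∧ ∀ e, G.Adj e v → G.src e = v

/-- `Edge^∞(G)`: edges adjacent to a vertex of `Vert^∞(G)`. -/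
def InfEdge (e : Fin G.nE) : Prop :=
  ∃ v, G.Adj e v ∧ G.InfVert v

/-- The divergence of a vertex: sum of weights of incoming edges minus sum of weights of
outgoing edges. -/
def div (v : Fin G.nV) : ℤ :=
  (∑ e ∈ Finset.univ.filter (fun e => G.tgt e = v), (G.w e : ℤ)) -
    (∑ e ∈ Finset.univ.filter (fun e => G.src e = v), (G.w e : ℤ))

/-- A sink is a vertex all of whose adjacent edges are oriented toward it. -/
def IsSink (v : Fin G.nV) : Prop :=
  ∀ e, G.Adj e v → G.tgt e = v

/-- One step of the partial order on `Vert ⊔ Edge` induced by the orientation: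
a vertex is below each of its outgoing edges, and each edge is below its target. -/
def veStep : (Fin G.nV ⊕ Fin G.nE) → (Fin G.nV ⊕ Fin G.nE) → Prop
  | Sum.inl u, Sum.inr e => G.src e = u
  | Sum.inr e, Sum.inl v => G.tgt e = v
  | _, _ => False

end WOGraph

/-- `G` is a floor diagram (relative to a conic) of genus `g` and degree `a`. -/
structure IsFloorDiagram (G : WOGraph) (g a : ℕ) : Prop where
  conn : G.Connected
  acyclic : G.Acyclic
  betti : G.nE + 1 = G.nV + g
  div_floor : ∀ v, ¬ G.InfVert v → G.div v = 2 ∨ G.div v = 4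
  div_inf : ∀ v, G.InfVert v → G.div v ≤ -1
  sink_of_two : ∀ v, ¬ G.InfVert v → G.div v = 2 → G.IsSink v
  total_div : (∑ v ∈ Finset.univ.filter (fun v => G.InfVert v), G.div v) = -(2 * (a : ℤ))

/-- The marking domain `A₀ ⊔ A₁ ⊔ ⋯ ⊔ A_k`, where
`A₀ = {1, …, a − 1 + g + l(μ₁) + l(μ₂)}` and `|Aᵢ| = bᵢ`. -/
def MarkDom (k g a : ℕ) (b : Fin k → ℕ) (l1 l2 : ℕ) : Type :=
  Fin (a + g + l1 + l2 - 1) ⊕ (Σ i : Fin k, Fin (b i))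

/-- `m` is a `d`-marking of type `(μ₁, μ₂)` of the floor diagram `G` of genus `g` and
degree `a`, where `d` is encoded by `a = d·[L]` and `bᵢ = d·[Eᵢ]`. -/
structure IsMarking (k g a : ℕ) (b : Fin k → ℕ) (μ₁ μ₂ : List ℕ) (G : WOGraph)
    (m : MarkDom k g a b μ₁.length μ₂.length → Fin G.nV ⊕ Fin G.nE) : Prop where
  inj : Function.Injective m
  /-- `m` is increasing: on `A₀` (with its natural order) it is compatible with the strict
  partial order on `Vert ⊔ Edge` induced by the orientation; the elements of
  `A₁, …, A_k` are incomparable, hence impose no condition. -/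
  incr : ∀ i j : Fin (a + g + μ₁.length + μ₂.length - 1),
    Relation.TransGen G.veStep (m (Sum.inl i)) (m (Sum.inl j)) → i < j
  /-- No floor of degree `1` is in the image of `m`. -/
  no_floor_one : ∀ v, ¬ G.InfVert v → G.div v = 2 → ∀ p, m p ≠ Sum.inl v
  /-- For `v ∈ Vert^∞` with adjacent edge `e`, exactly one of `v`, `e` is in the image. -/
  inf_pair : ∀ v, G.InfVert v → ∀ e, G.Adj e v →
    Xor' (∃ p, m p = Sum.inl v) (∃ p, m p = Sum.inr e)
  /-- `m(A₁ ∪ ⋯ ∪ A_k) ⊆ Vert^∞`. -/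
  exc_vert : ∀ (i : Fin k) (p : Fin (b i)),
    ∃ v, G.InfVert v ∧ m (Sum.inr ⟨i, p⟩) = Sum.inl v
  /-- `m({1, …, l(μ₁)}) = m(A₀) ∩ Vert^∞`. -/
  mu1_vert : ∀ i : Fin (a + g + μ₁.length + μ₂.length - 1),
    (∃ v, G.InfVert v ∧ m (Sum.inl i) = Sum.inl v) ↔ (i : ℕ) < μ₁.length
  /-- Every floor is adjacent to at most one edge adjacent to a vertex of `m(Aᵢ)`. -/
  floor_once : ∀ (i : Fin k) (v : Fin G.nV), ¬ G.InfVert v →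
    ∀ e e' : Fin G.nE, G.Adj e v → G.Adj e' v →
      (∃ (p : Fin (b i)) (u : Fin G.nV), m (Sum.inr ⟨i, p⟩) = Sum.inl u ∧ G.Adj e u) →
      (∃ (p : Fin (b i)) (u : Fin G.nV), m (Sum.inr ⟨i, p⟩) = Sum.inl u ∧ G.Adj e' u) →
      e = e'
  /-- For `i ∈ {1, …, l(μ₁)}`, the edge adjacent to `m(i)` has weight `μ₁^{(i)}`. -/
  mu1_weight : ∀ (i : Fin (a + g + μ₁.length + μ₂.length - 1)) (h : (i : ℕ) < μ₁.length)
    (v : Fin G.nV) (e : Fin G.nE),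
      m (Sum.inl i) = Sum.inl v → G.Adj e v → G.w e = μ₁.get ⟨(i : ℕ), h⟩
  /-- Exactly `l(μ₂)` edges of `Edge^∞` are in the image of `m|_{A₀}`, and their weights
  are the entries of `μ₂`. -/
  mu2_edges :
    ((Finset.univ.filter fun e : Fin G.nE =>
        G.InfEdge e ∧ ∃ i : Fin (a + g + μ₁.length + μ₂.length - 1),
          m (Sum.inl i) = Sum.inr e).val.map G.w) = (μ₂ : Multiset ℕ)

/-- A `d`-marked floor diagram of genus `g` and type `(μ₁, μ₂)`, where the class `d` is
encoded by `a = d·[L]` and `bᵢ = d·[Eᵢ]`. -/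
structure MarkedFD (k g a : ℕ) (b : Fin k → ℕ) (μ₁ μ₂ : List ℕ) where
  G : WOGraph
  m : MarkDom k g a b μ₁.length μ₂.length → Fin G.nV ⊕ Fin G.nE
  fd : IsFloorDiagram G g a
  marking : IsMarking k g a b μ₁ μ₂ G m

namespace MarkedFD

variable {k g a : ℕ} {b : Fin k → ℕ} {μ₁ μ₂ : List ℕ}

/-- Equivalence of marked floor diagrams: an isomorphism of weighted oriented graphs
together with a bijection of the marking sets which is the identity on `A₀` and maps
each `Aᵢ` (`i ≥ 1`) bijectively onto itself, compatible with the markings. -/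
def Equivalent (X Y : MarkedFD k g a b μ₁ μ₂) : Prop :=
  ∃ (φV : Fin X.G.nV ≃ Fin Y.G.nV) (φE : Fin X.G.nE ≃ Fin Y.G.nE)
    (ψ : MarkDom k g a b μ₁.length μ₂.length ≃ MarkDom k g a b μ₁.length μ₂.length),
      (∀ e, Y.G.src (φE e) = φV (X.G.src e)) ∧
      (∀ e, Y.G.tgt (φE e) = φV (X.G.tgt e)) ∧
      (∀ e, Y.G.w (φE e) = X.G.w e) ∧
      (∀ i, ψ (Sum.inl i) = Sum.inl i) ∧
      (∀ (i : Fin k) (p : Fin (b i)), ∃ p' : Fin (b i),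
        ψ (Sum.inr ⟨i, p⟩) = Sum.inr ⟨i, p'⟩) ∧
      (∀ p, Y.m (ψ p) = Sum.map φV φE (X.m p))

variable (X : MarkedFD k g a b μ₁ μ₂)

/-- `Edge^{μ₁}`: edges adjacent to `m({1, …, l(μ₁)})`. -/
def EdgeMu1 : Finset (Fin X.G.nE) :=
  Finset.univ.filter fun e =>
    ∃ i : Fin (a + g + μ₁.length + μ₂.length - 1), (i : ℕ) < μ₁.length ∧
      ∃ v, X.m (Sum.inl i) = Sum.inl v ∧ X.G.Adj e v

/-- `Edge^{μ₂}`: the `l(μ₂)` edges of `Edge^∞` in the image of `m|_{A₀}`. -/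
def EdgeMu2 : Finset (Fin X.G.nE) :=
  Finset.univ.filter fun e =>
    X.G.InfEdge e ∧ ∃ i : Fin (a + g + μ₁.length + μ₂.length - 1),
      X.m (Sum.inl i) = Sum.inr e

/-- `Edge°`: edges not in `Edge^∞`. -/
def EdgeO : Finset (Fin X.G.nE) :=
  Finset.univ.filter fun e => ¬ X.G.InfEdge e

/-- The q-refined (Block–Göttsche) multiplicity of a marked floor diagram:
`∏_{e∈Edge^{μ₂}} [w(e)]_q/w(e) · ∏_{e∈Edge^{μ₁}} [w(e)]_q/w(e) · ∏_{e∈Edge^{μ₂}} w(e)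
 · ∏_{e∈Edge°} [w(e)]_q²`. -/
def multq : LaurentPolynomial ℚ :=
  (∏ e ∈ X.EdgeMu2, (C ((X.G.w e : ℚ)⁻¹) * qInt (X.G.w e))) *
    (∏ e ∈ X.EdgeMu1, (C ((X.G.w e : ℚ)⁻¹) * qInt (X.G.w e))) *
    (∏ e ∈ X.EdgeMu2, C ((X.G.w e : ℚ))) *
    (∏ e ∈ X.EdgeO, (qInt (X.G.w e)) ^ 2)

/-- The complex multiplicity of a marked floor diagram:
`∏_i μ₂^{(i)} · ∏_{e∈Edge°} w(e)²`. -/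
def multC : ℚ :=
  (μ₂.map fun x => (x : ℚ)).prod * ∏ e ∈ X.EdgeO, (X.G.w e : ℚ) ^ 2

end MarkedFD

/-- `N` is the refined count `N_q^{μ₁,μ₂}(X_k', d, g)` of `d`-marked floor diagrams of
genus `g` and type `(μ₁, μ₂)`: the sum of the q-refined multiplicities over a (finite) set
of representatives of the equivalence classes of marked floor diagrams. -/
def IsRefinedCount (k g a : ℕ) (b : Fin k → ℕ) (μ₁ μ₂ : List ℕ)
    (N : LaurentPolynomial ℚ) : Prop :=
  ∃ (ι : Type) (hι : Fintype ι) (rep : ι → MarkedFD k g a b μ₁ μ₂),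
    (∀ X : MarkedFD k g a b μ₁ μ₂, ∃! i : ι, X.Equivalent (rep i)) ∧
    N = ∑ i ∈ @Finset.univ ι hι, (rep i).multq

/-- `N` is the complex count `N_ℂ^{μ₁,μ₂}(X_k', d, g)` of `d`-marked floor diagrams of
genus `g` and type `(μ₁, μ₂)`. -/
def IsComplexCount (k g a : ℕ) (b : Fin k → ℕ) (μ₁ μ₂ : List ℕ) (N : ℚ) : Prop :=
  ∃ (ι : Type) (hι : Fintype ι) (rep : ι → MarkedFD k g a b μ₁ μ₂),
    (∀ X : MarkedFD k g a b μ₁ μ₂, ∃! i : ι, X.Equivalent (rep i)) ∧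
    N = ∑ i ∈ @Finset.univ ι hι, (rep i).multC

end FloorDiagrams

namespace WOGraph

variable (G : WOGraph)

lemma InfVert.exists_edge {G : WOGraph} {v : Fin G.nV} (h : G.InfVert v) :
    ∃ e, G.src e = v ∧ G.tgt e ≠ v ∧ ∀ e', G.Adj e' v → e' = e := by
  obtain ⟨hleaf, hout⟩ := h
  have hd : (Finset.univ.filter fun e => G.src e = v).card +
      (Finset.univ.filter fun e => G.tgt e = v).card = 1 := hleaf
  have htgt : ∀ e, G.tgt e ≠ v := by
    intro e he
    have h1 : 0 < (Finset.univ.filter fun e => G.tgt e = v).card :=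
      Finset.card_pos.2 ⟨e, by simp [he]⟩
    have h2 : 0 < (Finset.univ.filter fun e => G.src e = v).card :=
      Finset.card_pos.2 ⟨e, by simp [hout e (Or.inr he)]⟩
    omega
  have h0 : (Finset.univ.filter fun e => G.tgt e = v).card = 0 := by
    simp [htgt]
  rw [h0, add_zero, Finset.card_eq_one] at hd
  obtain ⟨e, he⟩ := hd
  have hmem : ∀ e', G.src e' = v ↔ e' = e := by
    intro e'
    have := Finset.ext_iff.1 he e'
    simpa using this
  refine ⟨e, (hmem e).2 rfl, htgt e, fun e' he' => (hmem e').1 (hout e' he')⟩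

lemma div_eq_sum (v : Fin G.nV) :
    G.div v = ∑ e, (if G.tgt e = v then (G.w e : ℤ) else 0) -
      ∑ e, (if G.src e = v then (G.w e : ℤ) else 0) := by
  rw [div, Finset.sum_filter, Finset.sum_filter]

lemma sum_div : ∑ v, G.div v = 0 := by
  simp only [div_eq_sum, Finset.sum_sub_distrib]
  rw [Finset.sum_comm, Finset.sum_comm (s := Finset.univ (α := Fin G.nV))]
  simp

lemma InfVert.div_eq {G : WOGraph} {v : Fin G.nV} (h : G.InfVert v) {e : Fin G.nE}
    (he : G.src e = v) : G.div v = -(G.w e : ℤ) := by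
  obtain ⟨e₀, _, h₂, h₃⟩ := h.exists_edge
  obtain rfl := h₃ e (Or.inl he)
  have ht : ∀ e', G.tgt e' ≠ v := fun e' he' => by
    obtain rfl := h₃ e' (Or.inr he')
    exact h₂ he'
  have hs : ∀ e', G.src e' = v ↔ e' = e :=
    fun e' => ⟨fun h' => h₃ e' (Or.inl h'), fun h' => h' ▸ he⟩
  simp [div_eq_sum, ht, hs]

lemma Acyclic.src_ne_tgt {G : WOGraph} (h : G.Acyclic) (e : Fin G.nE) : G.src e ≠ G.tgt e :=
  fun he => h (G.src e) (Relation.TransGen.single ⟨e, rfl, he.symm⟩)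

lemma infEdge_iff {G : WOGraph} {e : Fin G.nE} : G.InfEdge e ↔ G.InfVert (G.src e) := by
  refine ⟨fun ⟨v, hv, hi⟩ => ?_, fun h => ⟨_, Or.inl rfl, h⟩⟩
  rwa [hi.2 e hv]

lemma Acyclic.not_infVert_tgt {G : WOGraph} (h : G.Acyclic) (e : Fin G.nE) :
    ¬ G.InfVert (G.tgt e) :=
  fun hi => h.src_ne_tgt e (hi.2 e (Or.inr rfl))

lemma transGen_veStep_src_tgt (e : Fin G.nE) :
    Relation.TransGen G.veStep (Sum.inl (G.src e)) (Sum.inl (G.tgt e)) :=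
  (Relation.TransGen.single (show G.veStep (Sum.inl (G.src e)) (Sum.inr e) from rfl)).tail rfl

lemma transGen_veStep_of_transGen_dirStep {u v : Fin G.nV}
    (h : Relation.TransGen G.dirStep u v) :
    Relation.TransGen G.veStep (Sum.inl u) (Sum.inl v) := by
  induction h with
  | single h =>
    obtain ⟨e, rfl, rfl⟩ := h
    exact G.transGen_veStep_src_tgt e
  | tail _ h ih =>
    obtain ⟨e, rfl, rfl⟩ := h
    exact ih.trans (G.transGen_veStep_src_tgt e)

lemma lt_of_transGen_veStep {rk : Fin G.nV ⊕ Fin G.nE → ℕ}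
    (hrk : ∀ x y, G.veStep x y → rk x < rk y) {x y : Fin G.nV ⊕ Fin G.nE}
    (h : Relation.TransGen G.veStep x y) : rk x < rk y := by
  induction h with
  | single h => exact hrk _ _ h
  | tail _ h ih => exact ih.trans (hrk _ _ h)

lemma acyclic_of_rank {rk : Fin G.nV ⊕ Fin G.nE → ℕ}
    (hrk : ∀ x y, G.veStep x y → rk x < rk y) : G.Acyclic := fun _ h =>
  lt_irrefl _ (G.lt_of_transGen_veStep hrk (G.transGen_veStep_of_transGen_dirStep h))

end WOGraph

namespace MarkedFD

variable {k g a : ℕ} {b : Fin k → ℕ} {μ₁ μ₂ : List ℕ} {X Y Z : MarkedFD k g a b μ₁ μ₂}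

lemma Equivalent.symm (h : X.Equivalent Y) : Y.Equivalent X := by
  obtain ⟨φV, φE, ψ, h1, h2, h3, h4, h5, h6⟩ := h
  refine ⟨φV.symm, φE.symm, ψ.symm, fun e => ?_, fun e => ?_, fun e => ?_, fun i => ?_,
    fun i p => ?_, fun p => ?_⟩
  · rw [Equiv.eq_symm_apply, ← h1, Equiv.apply_symm_apply]
  · rw [Equiv.eq_symm_apply, ← h2, Equiv.apply_symm_apply]
  · rw [← h3, Equiv.apply_symm_apply]
  · exact (Equiv.symm_apply_eq ψ).2 (h4 i).symm
  · choose q hq using h5 i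
    have hinj : Function.Injective q := fun x y hxy => by
      have hx := hq x
      rw [hxy, ← hq y] at hx
      simpa using Sum.inr.inj (ψ.injective hx)
    obtain ⟨p', rfl⟩ := Finite.surjective_of_injective hinj p
    exact ⟨p', (Equiv.symm_apply_eq ψ).2 (hq p').symm⟩
  · have := h6 (ψ.symm p)
    rw [Equiv.apply_symm_apply] at this
    rw [this]
    cases X.m (ψ.symm p) <;> simp

lemma Equivalent.trans (h : X.Equivalent Y) (h' : Y.Equivalent Z) : X.Equivalent Z := by
  obtain ⟨φV, φE, ψ, h1, h2, h3, h4, h5, h6⟩ := h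
  obtain ⟨φV', φE', ψ', h1', h2', h3', h4', h5', h6'⟩ := h'
  refine ⟨φV.trans φV', φE.trans φE', ψ.trans ψ', fun e => ?_, fun e => ?_, fun e => ?_,
    fun i => ?_, fun i p => ?_, fun p => ?_⟩
  · simp [h1, h1']
  · simp [h2, h2']
  · simp [h3, h3']
  · exact (congrArg ψ' (h4 i)).trans (h4' i)
  · obtain ⟨p', hp'⟩ := h5 i p
    obtain ⟨p'', hp''⟩ := h5' i p'
    exact ⟨p'', (congrArg ψ' hp').trans hp''⟩
  · simp only [Equiv.trans_apply, h6', h6]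
    cases X.m p <;> simp

end MarkedFD

/-- The list of marked floors and inner edges of a star-shaped floor diagram, in the order of
their marks: one floor of degree `2` at the centre, `n + 1` outer floors of divergence `d`, and
an inner edge from the centre to each outer floor. -/
structure IsStarTemplate (n d : ℕ) (M : Fin 3 → Fin (n + 2) ⊕ Fin (n + 1)) : Prop where
  inj : Function.Injective M
  zero : M 0 = Sum.inl 0
  edge_mem : ∀ k, ∃ s, M s = Sum.inr k
  edge_lt : ∀ s s' k, M s = Sum.inr k → M s' = Sum.inl k.succ → s < s'
  outer_mem : ∀ k, d = 4 → ∃ s, M s = Sum.inl k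
  floor_mem : ∀ s k, M s = Sum.inl k → k = 0 ∨ d = 4
  div_eq : d = 2 ∨ d = 4
  mul_eq : (n + 1) * d = 4

/-- Combinatorial data of a marked star-shaped floor diagram: the leaf `i` is attached to the
floor `f i`, the `k`-th inner edge has weight `u k`, and `j` is the mark of the infinite edge
starting at the leaf `7`. -/
structure StarDiagram (n d : ℕ) (M : Fin 3 → Fin (n + 2) ⊕ Fin (n + 1)) where
  f : Fin 8 → Fin (n + 2)
  u : Fin (n + 1) → ℕ
  j : Fin 4
  u_pos : ∀ k, 0 < u k
  u_add : ∀ k, u k + (Finset.univ.filter fun i => f i = k.succ).card = d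
  lt_succAbove : ∀ s, M s = Sum.inl (f 7) → j < j.succAbove s

namespace StarDiagram

variable {n d : ℕ} {M : Fin 3 → Fin (n + 2) ⊕ Fin (n + 1)} (D : StarDiagram n d M)

/-- The underlying graph of a marked star-shaped floor diagram. -/
def graph : WOGraph where
  nV := 8 + (n + 2)
  nE := 8 + (n + 1)
  src := Fin.append (fun i => Fin.castAdd (n + 2) i) (fun _ => Fin.natAdd 8 0)
  tgt := Fin.append (fun i => Fin.natAdd 8 (D.f i)) (fun k => Fin.natAdd 8 k.succ)
  w := Fin.append (fun _ => 1) D.u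
  w_pos := Fin.addCases (by simp) (by simpa using D.u_pos)

/-- The `i`-th leaf. -/
def leaf (i : Fin 8) : Fin D.graph.nV := Fin.castAdd (n + 2) i

/-- The `k`-th floor. -/
def floor (k : Fin (n + 2)) : Fin D.graph.nV := Fin.natAdd 8 k

/-- The edge adjacent to the `i`-th leaf. -/
def leafEdge (i : Fin 8) : Fin D.graph.nE := Fin.castAdd (n + 1) i

/-- The edge from the central floor to the `k`-th outer floor. -/
def innerEdge (k : Fin (n + 1)) : Fin D.graph.nE := Fin.natAdd 8 k

lemma forall_vert {P : Fin D.graph.nV → Prop} : (∀ v, P v) ↔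
    (∀ i, P (D.leaf i)) ∧ ∀ k, P (D.floor k) :=
  ⟨fun h => ⟨fun _ => h _, fun _ => h _⟩, fun h => Fin.addCases h.1 h.2⟩

lemma forall_edge {P : Fin D.graph.nE → Prop} : (∀ e, P e) ↔
    (∀ i, P (D.leafEdge i)) ∧ ∀ k, P (D.innerEdge k) :=
  ⟨fun h => ⟨fun _ => h _, fun _ => h _⟩, fun h => Fin.addCases h.1 h.2⟩

lemma exists_edge {P : Fin D.graph.nE → Prop} : (∃ e, P e) ↔
    (∃ i, P (D.leafEdge i)) ∨ ∃ k, P (D.innerEdge k) := by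
  rw [← not_iff_not]
  push Not
  exact D.forall_edge

@[to_additive]
lemma prod_vert {A : Type*} [CommMonoid A] (F : Fin D.graph.nV → A) :
    ∏ v, F v = (∏ i, F (D.leaf i)) * ∏ k, F (D.floor k) :=
  Fin.prod_univ_add F

@[to_additive]
lemma prod_edge {A : Type*} [CommMonoid A] (F : Fin D.graph.nE → A) :
    ∏ e, F e = (∏ i, F (D.leafEdge i)) * ∏ k, F (D.innerEdge k) :=
  Fin.prod_univ_add F

@[simp] lemma leaf_inj {i i' : Fin 8} : D.leaf i = D.leaf i' ↔ i = i' :=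
  (Fin.castAdd_injective 8 (n + 2)).eq_iff

@[simp] lemma floor_inj {k k' : Fin (n + 2)} : D.floor k = D.floor k' ↔ k = k' :=
  (Fin.natAdd_injective (n + 2) 8).eq_iff

@[simp] lemma leafEdge_inj {i i' : Fin 8} : D.leafEdge i = D.leafEdge i' ↔ i = i' :=
  (Fin.castAdd_injective 8 (n + 1)).eq_iff

@[simp] lemma innerEdge_inj {k k' : Fin (n + 1)} : D.innerEdge k = D.innerEdge k' ↔ k = k' :=
  (Fin.natAdd_injective (n + 1) 8).eq_iff

@[simp] lemma leaf_ne_floor (i : Fin 8) (k : Fin (n + 2)) : D.leaf i ≠ D.floor k := by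
  intro h
  have := congrArg Fin.val h
  simp [leaf, floor] at this
  omega

@[simp] lemma floor_ne_leaf (i : Fin 8) (k : Fin (n + 2)) : D.floor k ≠ D.leaf i :=
  (D.leaf_ne_floor i k).symm

@[simp] lemma leafEdge_ne_innerEdge (i : Fin 8) (k : Fin (n + 1)) :
    D.leafEdge i ≠ D.innerEdge k := by
  intro h
  have := congrArg Fin.val h
  simp [leafEdge, innerEdge] at this
  omega

@[simp] lemma innerEdge_ne_leafEdge (i : Fin 8) (k : Fin (n + 1)) :
    D.innerEdge k ≠ D.leafEdge i :=
  (D.leafEdge_ne_innerEdge i k).symm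

@[simp] lemma src_leafEdge (i : Fin 8) : D.graph.src (D.leafEdge i) = D.leaf i :=
  Fin.append_left (fun i : Fin 8 => Fin.castAdd (n + 2) i) (fun _ => Fin.natAdd 8 0) i

@[simp] lemma src_innerEdge (k : Fin (n + 1)) : D.graph.src (D.innerEdge k) = D.floor 0 :=
  Fin.append_right (fun i : Fin 8 => Fin.castAdd (n + 2) i) (fun _ => Fin.natAdd 8 0) k

@[simp] lemma tgt_leafEdge (i : Fin 8) : D.graph.tgt (D.leafEdge i) = D.floor (D.f i) :=
  Fin.append_left (fun i : Fin 8 => Fin.natAdd 8 (D.f i)) (fun k => Fin.natAdd 8 k.succ) i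

@[simp] lemma tgt_innerEdge (k : Fin (n + 1)) : D.graph.tgt (D.innerEdge k) = D.floor k.succ :=
  Fin.append_right (fun i : Fin 8 => Fin.natAdd 8 (D.f i)) (fun k => Fin.natAdd 8 k.succ) k

@[simp] lemma w_leafEdge (i : Fin 8) : D.graph.w (D.leafEdge i) = 1 :=
  Fin.append_left (fun _ => 1) D.u i

@[simp] lemma w_innerEdge (k : Fin (n + 1)) : D.graph.w (D.innerEdge k) = D.u k :=
  Fin.append_right (fun _ => 1) D.u k

@[simp] lemma div_leaf (i : Fin 8) : D.graph.div (D.leaf i) = -1 := by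
  simp [WOGraph.div_eq_sum, D.sum_edge]

@[simp] lemma div_floor_zero : D.graph.div (D.floor 0) =
    ((Finset.univ.filter fun i => D.f i = 0).card : ℤ) - ∑ k, (D.u k : ℤ) := by
  simp [WOGraph.div_eq_sum, D.sum_edge, Fin.succ_ne_zero]

@[simp] lemma div_floor_succ (k : Fin (n + 1)) : D.graph.div (D.floor k.succ) = d := by
  refine Eq.trans ?_ (congrArg Nat.cast (D.u_add k))
  simp [WOGraph.div_eq_sum, D.sum_edge, (Fin.succ_ne_zero _).symm, add_comm]

variable (hM : IsStarTemplate n d M)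
include hM

lemma card_zero : (Finset.univ.filter fun i => D.f i = 0).card = 4 + ∑ k, D.u k := by
  have h1 : ∑ k, (Finset.univ.filter fun i => D.f i = k).card = 8 := by
    simpa using (Finset.card_eq_sum_card_fiberwise (s := Finset.univ) (t := Finset.univ)
      (f := D.f) (by simp)).symm
  have h2 : ∑ k, (D.u k + (Finset.univ.filter fun i => D.f i = k.succ).card) = 4 := by
    simp [D.u_add, ← hM.mul_eq]
  rw [Fin.sum_univ_succ] at h1
  rw [Finset.sum_add_distrib] at h2
  omega

lemma div_floor (k : Fin (n + 2)) : D.graph.div (D.floor k) = if k = 0 then 4 else (d : ℤ) := by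
  cases k using Fin.cases with
  | zero => simp [D.card_zero hM]
  | succ k => simp [Fin.succ_ne_zero]

omit hM in
@[simp] lemma infVert_leaf (i : Fin 8) : D.graph.InfVert (D.leaf i) := by
  constructor
  · have h1 : (Finset.univ.filter fun e => D.graph.src e = D.leaf i) = {D.leafEdge i} := by
      ext e
      revert e
      simp [D.forall_edge]
    have h2 : (Finset.univ.filter fun e => D.graph.tgt e = D.leaf i) = ∅ := by
      ext e
      revert e
      simp [D.forall_edge]
    simp [WOGraph.IsLeaf, WOGraph.degree, h1, h2]
  · simp [D.forall_edge, WOGraph.Adj]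

lemma not_infVert_floor (k : Fin (n + 2)) : ¬ D.graph.InfVert (D.floor k) := by
  intro h
  obtain ⟨e, he, -, -⟩ := h.exists_edge
  have h1 := h.div_eq he
  have h2 := hM.div_eq
  rw [D.div_floor hM] at h1
  split_ifs at h1 <;> omega

lemma infEdge_iff (e : Fin D.graph.nE) : D.graph.InfEdge e ↔ ∃ i, e = D.leafEdge i := by
  rw [WOGraph.infEdge_iff]
  revert e
  simp [D.forall_edge, D.not_infVert_floor hM]

lemma exists_template_rank : ∃ r : Fin (n + 2) ⊕ Fin (n + 1) → ℕ, (∀ x, 1 < r x) ∧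
    (∀ k, r (Sum.inl 0) < r (Sum.inr k)) ∧ (∀ k, r (Sum.inr k) < r (Sum.inl k.succ)) ∧
    (∀ s, r (M s) = 2 * ((D.j.succAbove s : ℕ) + 1)) ∧
    2 * ((D.j : ℕ) + 1) < r (Sum.inl (D.f 7)) := by
  let r : Fin (n + 2) ⊕ Fin (n + 1) → ℕ := fun x =>
    if h : ∃ s, M s = x then 2 * ((D.j.succAbove h.choose : ℕ) + 1) else 10
  have h1 : ∀ s, r (M s) = 2 * ((D.j.succAbove s : ℕ) + 1) := fun s => by
    have h : ∃ s', M s' = M s := ⟨s, rfl⟩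
    simp only [r, dif_pos h, hM.inj h.choose_spec]
  have h2 : ∀ x, (∃ s, M s = x) ∨ r x = 10 := fun x => or_iff_not_imp_left.2 fun h => dif_neg h
  refine ⟨r, fun x => ?_, fun k => ?_, fun k => ?_, h1, ?_⟩
  · rcases h2 x with ⟨s, rfl⟩ | h
    · rw [h1]
      omega
    · omega
  · obtain ⟨s, hs⟩ := hM.edge_mem k
    have h0 : 0 < s := Fin.pos_of_ne_zero fun h => by simp [h, hM.zero] at hs
    have := Fin.lt_def.1 (D.j.strictMono_succAbove h0)
    rw [← hs, ← hM.zero, h1, h1]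
    omega
  · obtain ⟨s, hs⟩ := hM.edge_mem k
    rcases h2 (Sum.inl k.succ) with ⟨s', hs'⟩ | h
    · have := Fin.lt_def.1 (D.j.strictMono_succAbove (hM.edge_lt s s' k hs hs'))
      rw [← hs, ← hs', h1, h1]
      omega
    · rw [← hs, h1, h]
      omega
  · rcases h2 (Sum.inl (D.f 7)) with ⟨s, hs⟩ | h
    · have := Fin.lt_def.1 (D.lt_succAbove s hs)
      rw [← hs, h1]
      omega
    · omega

lemma exists_rank : ∃ rk : Fin D.graph.nV ⊕ Fin D.graph.nE → ℕ,
    (∀ x y, D.graph.veStep x y → rk x < rk y) ∧ rk (Sum.inl (D.leaf 6)) = 0 ∧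
    rk (Sum.inr (D.leafEdge 7)) = 2 * ((D.j : ℕ) + 1) ∧
    ∀ s, rk (Sum.map D.floor D.innerEdge (M s)) = 2 * ((D.j.succAbove s : ℕ) + 1) := by
  obtain ⟨r, h1, h2, h3, h4, h5⟩ := D.exists_template_rank hM
  let rV : Fin D.graph.nV → ℕ := Fin.append (fun _ : Fin 8 => 0) (fun k => r (Sum.inl k))
  let rE : Fin D.graph.nE → ℕ := Fin.append
    (fun i : Fin 8 => if i = 7 then 2 * ((D.j : ℕ) + 1) else 1) (fun k => r (Sum.inr k))
  have a1 : ∀ i, rV (D.leaf i) = 0 := fun i => Fin.append_left _ _ i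
  have a2 : ∀ k, rV (D.floor k) = r (Sum.inl k) := fun k => Fin.append_right _ _ k
  have a3 : ∀ i, rE (D.leafEdge i) = if i = 7 then 2 * ((D.j : ℕ) + 1) else 1 :=
    fun i => Fin.append_left _ _ i
  have a4 : ∀ k, rE (D.innerEdge k) = r (Sum.inr k) := fun k => Fin.append_right _ _ k
  refine ⟨Sum.elim rV rE, ?_, a1 6, by simp [a3], fun s => ?_⟩
  · have b1 : ∀ e, rV (D.graph.src e) < rE e := by
      rw [D.forall_edge]
      refine ⟨fun i => ?_, fun k => ?_⟩
      · rw [D.src_leafEdge, a1, a3]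
        split_ifs <;> omega
      · rw [D.src_innerEdge, a2, a4]
        exact h2 k
    have b2 : ∀ e, rE e < rV (D.graph.tgt e) := by
      rw [D.forall_edge]
      refine ⟨fun i => ?_, fun k => ?_⟩
      · rw [D.tgt_leafEdge, a2, a3]
        split_ifs with h
        · rw [h]
          exact h5
        · exact h1 _
      · rw [D.tgt_innerEdge, a2, a4]
        exact h3 k
    rintro (u | e) (v | e') h
    · exact h.elim
    · obtain rfl : D.graph.src e' = u := h
      exact b1 e'
    · obtain rfl : D.graph.tgt e = v := h
      exact b2 e
    · exact h.elim
  · rw [← h4 s]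
    cases M s <;> simp [a2, a4]

lemma isFloorDiagram : IsFloorDiagram D.graph 0 4 where
  conn := by
    have h0 : ∀ e, D.graph.connStep (D.graph.src e) (D.graph.tgt e) :=
      fun e => ⟨e, Or.inl ⟨rfl, rfl⟩⟩
    have hsymm : Std.Symm D.graph.connStep := ⟨fun u v ⟨e, he⟩ => ⟨e, he.symm⟩⟩
    have hfl : ∀ k, Relation.ReflTransGen D.graph.connStep (D.floor k) (D.floor 0) := by
      intro k
      cases k using Fin.cases with
      | zero => rfl
      | succ k => exact .single (hsymm.symm _ _ (by simpa using h0 (D.innerEdge k)))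
    have hall : ∀ v, Relation.ReflTransGen D.graph.connStep v (D.floor 0) :=
      D.forall_vert.2 ⟨fun i => .head (by simpa using h0 (D.leafEdge i)) (hfl _), hfl⟩
    exact ⟨show 0 < 8 + (n + 2) by omega, fun u v =>
      (hall u).trans (Relation.ReflTransGen.stdSymm.symm _ _ (hall v))⟩
  acyclic := by
    obtain ⟨rk, hrk, -⟩ := D.exists_rank hM
    exact D.graph.acyclic_of_rank hrk
  betti := rfl
  div_floor := by
    have h2 := hM.div_eq
    refine D.forall_vert.2 ⟨by simp, fun k _ => ?_⟩
    rw [D.div_floor hM]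
    split_ifs <;> omega
  div_inf := D.forall_vert.2 ⟨by simp, fun k h => (D.not_infVert_floor hM k h).elim⟩
  sink_of_two := by
    refine D.forall_vert.2 ⟨by simp, fun k _ hk => ?_⟩
    rw [D.div_floor hM] at hk
    split_ifs at hk with h0
    · omega
    refine D.forall_edge.2 ⟨by simp [WOGraph.Adj], fun k' => ?_⟩
    simp [WOGraph.Adj, Ne.symm h0]
  total_div := by
    simp [Finset.sum_filter, D.sum_vert, D.not_infVert_floor hM]

omit hM
/-- The marking on `A₀`. -/
def mark (p : Fin 5) : Fin D.graph.nV ⊕ Fin D.graph.nE :=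
  Fin.cases (Sum.inl (D.leaf 6)) (D.j.insertNth (α := fun _ => _) (Sum.inr (D.leafEdge 7))
    fun s => Sum.map D.floor D.innerEdge (M s)) p

@[simp] lemma mark_zero : D.mark 0 = Sum.inl (D.leaf 6) := rfl

@[simp] lemma mark_j : D.mark D.j.succ = Sum.inr (D.leafEdge 7) := by
  simp [mark]

@[simp] lemma mark_succAbove (s : Fin 3) :
    D.mark (D.j.succAbove s).succ = Sum.map D.floor D.innerEdge (M s) := by
  simp [mark]

lemma forall_mark {P : Fin 5 → Prop} :
    (∀ p, P p) ↔ P 0 ∧ P D.j.succ ∧ ∀ s, P (D.j.succAbove s).succ := by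
  rw [Fin.forall_fin_succ, Fin.forall_iff_succAbove D.j]

/-- The marking on `A₁ ⊔ ⋯ ⊔ A₆`. -/
def excMark (q : Σ _ : Fin 6, Fin 1) : Fin D.graph.nV ⊕ Fin D.graph.nE :=
  Sum.inl (D.leaf (q.1.castLE (by norm_num)))

end StarDiagram

namespace StarDiagram

variable {n d : ℕ} {M : Fin 3 → Fin (n + 2) ⊕ Fin (n + 1)} (D : StarDiagram n d M)

/-- The marking of a star-shaped floor diagram. -/
def marking (p : MarkDom 6 0 4 (fun _ => 1) [1].length [1].length) :
    Fin D.graph.nV ⊕ Fin D.graph.nE :=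
  Sum.elim D.mark D.excMark p

lemma forall_marking {P : Fin D.graph.nV ⊕ Fin D.graph.nE → Prop} :
    (∀ p, P (D.marking p)) ↔ P (Sum.inl (D.leaf 6)) ∧ P (Sum.inr (D.leafEdge 7)) ∧
      (∀ s, P (Sum.map D.floor D.innerEdge (M s))) ∧
      ∀ i : Fin 6, P (Sum.inl (D.leaf (i.castLE (by norm_num)))) := by
  refine Sum.forall.trans ?_
  refine (and_congr_left' (D.forall_mark (P := fun p => P (D.mark p)))).trans ?_
  simp only [mark_zero, mark_j, mark_succAbove, and_assoc]
  exact and_congr_right fun _ => and_congr_right fun _ => and_congr_right fun _ =>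
    ⟨fun h i => h ⟨i, 0⟩, fun h q => h q.1⟩

lemma inl_ne_map (s : Fin 3) (i : Fin 8) :
    Sum.map D.floor D.innerEdge (M s) ≠ Sum.inl (D.leaf i) := by
  cases M s <;> simp

lemma inr_ne_map (s : Fin 3) (i : Fin 8) :
    Sum.map D.floor D.innerEdge (M s) ≠ Sum.inr (D.leafEdge i) := by
  cases M s <;> simp

lemma exists_marking_eq_leaf (i : Fin 8) :
    (∃ p, D.marking p = Sum.inl (D.leaf i)) ↔ i ≠ 7 := by
  constructor
  · rintro ⟨p, hp⟩ rfl
    refine D.forall_marking (P := fun x => x ≠ Sum.inl (D.leaf 7)) |>.2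
      ⟨?_, by simp, fun s => D.inl_ne_map s 7, fun k => ?_⟩ p hp
    · simp
    · rw [Ne, Sum.inl.injEq, leaf_inj]
      revert k
      decide
  · intro h
    rcases eq_or_ne i 6 with rfl | h6
    · exact ⟨Sum.inl (0 : Fin 5), rfl⟩
    · have hi : (i : ℕ) < 6 := by
        revert i
        decide
      exact ⟨Sum.inr ⟨⟨i, hi⟩, 0⟩, rfl⟩

lemma exists_mark_eq_leafEdge (i : Fin 8) :
    (∃ p, D.mark p = Sum.inr (D.leafEdge i)) ↔ i = 7 := by
  constructor
  · rintro ⟨p, hp⟩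
    revert p
    refine D.forall_mark.2 ⟨by simp, by simp [eq_comm], by simp [inr_ne_map]⟩
  · rintro rfl
    exact ⟨_, D.mark_j⟩

lemma exists_marking_eq_leafEdge (i : Fin 8) :
    (∃ p, D.marking p = Sum.inr (D.leafEdge i)) ↔ i = 7 := by
  rw [← D.exists_mark_eq_leafEdge]
  refine ⟨?_, fun ⟨p, hp⟩ => ⟨Sum.inl p, hp⟩⟩
  rintro ⟨p | q, hp⟩
  · exact ⟨p, hp⟩
  · exact (Sum.inl_ne_inr hp).elim

lemma adj_leaf_iff {e : Fin D.graph.nE} {i : Fin 8} :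
    D.graph.Adj e (D.leaf i) ↔ e = D.leafEdge i := by
  revert e
  simp [D.forall_edge, WOGraph.Adj]

variable (hM : IsStarTemplate n d M)
include hM

lemma mark_injective : Function.Injective D.mark := by
  have hs : Function.Injective fun s => Sum.map D.floor D.innerEdge (M s) :=
    (Sum.map_injective.2 ⟨fun _ _ => (D.floor_inj).1, fun _ _ => (D.innerEdge_inj).1⟩).comp hM.inj
  intro p
  revert p
  refine D.forall_mark.2 ⟨D.forall_mark.2 ⟨by simp, by simp, ?_⟩,
    D.forall_mark.2 ⟨by simp, by simp, ?_⟩, fun s => D.forall_mark.2 ⟨?_, ?_, ?_⟩⟩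
  · exact fun s h => (D.inl_ne_map s 6 (by simpa using h.symm)).elim
  · exact fun s h => (D.inr_ne_map s 7 (by simpa using h.symm)).elim
  · exact fun h => (D.inl_ne_map s 6 (by simpa using h)).elim
  · exact fun h => (D.inr_ne_map s 7 (by simpa using h)).elim
  · intro s' h
    rw [mark_succAbove, mark_succAbove] at h
    rw [hs h]

lemma marking_injective : Function.Injective D.marking := by
  refine Function.Injective.sumElim (D.mark_injective hM) ?_ ?_
  · rintro ⟨i, p⟩ ⟨i', p'⟩ h
    simp only [excMark, Sum.inl.injEq, leaf_inj, Fin.castLE_inj] at h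
    subst h
    rw [Subsingleton.elim p p']
  · rintro p ⟨i, q⟩
    revert p
    refine D.forall_mark.2 ⟨?_, by simp [excMark], fun s => ?_⟩
    · rw [mark_zero, excMark, Ne, Sum.inl.injEq, leaf_inj]
      revert i
      decide
    · rw [mark_succAbove]
      exact D.inl_ne_map s _

lemma isMarking : IsMarking 6 0 4 (fun _ => 1) [1] [1] D.graph D.marking where
  inj := D.marking_injective hM
  incr := by
    obtain ⟨rk, h1, h2, h3, h4⟩ := D.exists_rank hM
    have hrk : ∀ p, rk (D.mark p) = 2 * (p : ℕ) := by
      refine D.forall_mark.2 ⟨by simp [h2], by simp [h3], fun s => ?_⟩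
      rw [mark_succAbove, h4, Fin.val_succ]
    intro i j hij
    have := D.graph.lt_of_transGen_veStep h1 hij
    erw [hrk i, hrk j] at this
    exact Fin.lt_def.2 (by omega)
  no_floor_one := by
    refine D.forall_vert.2 ⟨by simp, fun k _ hk => ?_⟩
    rw [D.div_floor hM] at hk
    split_ifs at hk with h0
    · omega
    refine D.forall_marking (P := fun x => x ≠ Sum.inl (D.floor k)) |>.2
      ⟨by simp, by simp, fun s h => ?_, by simp⟩
    cases hs : M s with
    | inl k' =>
      rw [hs, Sum.map_inl, Sum.inl.injEq, floor_inj] at h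
      subst h
      rcases hM.floor_mem s _ hs with h | h
      · exact h0 h
      · omega
    | inr k' => simp [hs] at h
  inf_pair := by
    refine D.forall_vert.2 ⟨fun i _ e he => ?_, fun k h => (D.not_infVert_floor hM k h).elim⟩
    rw [D.adj_leaf_iff.1 he, exists_marking_eq_leaf, exists_marking_eq_leafEdge]
    exact xor_not_left.2 Iff.rfl
  exc_vert := fun i p => ⟨_, D.infVert_leaf _, rfl⟩
  mu1_vert := by
    refine D.forall_mark.2 ⟨?_, ?_, fun s => ?_⟩
    · exact iff_of_true ⟨_, D.infVert_leaf 6, rfl⟩ (by simp)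
    · exact iff_of_false (fun ⟨v, _, hv⟩ => Sum.inr_ne_inl (D.mark_j.symm.trans hv)) (by simp)
    · refine iff_of_false ?_ (by simp)
      rintro ⟨v, h, hv⟩
      replace hv := (D.mark_succAbove s).symm.trans hv
      revert v
      exact D.forall_vert.2 ⟨fun i _ => D.inl_ne_map s i,
        fun k h => (D.not_infVert_floor hM k h).elim⟩
  floor_once := by
    rintro i v - e e' - - ⟨p, u, hu, he⟩ ⟨p', u', hu', he'⟩
    replace hu := Sum.inl.inj hu
    replace hu' := Sum.inl.inj hu'
    subst hu hu'
    rw [D.adj_leaf_iff.1 he, D.adj_leaf_iff.1 he']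
  mu1_weight := by
    refine D.forall_mark.2 ⟨?_, by simp, by simp⟩
    intro h v e hv he
    replace hv := Sum.inl.inj hv
    subst hv
    simp [D.adj_leaf_iff.1 he]
  mu2_edges := by
    have : (Finset.univ.filter fun e => D.graph.InfEdge e ∧
        ∃ p : Fin 5, D.marking (Sum.inl p) = Sum.inr e) = {D.leafEdge 7} := by
      ext e
      rw [Finset.mem_filter, Finset.mem_singleton, D.infEdge_iff hM]
      constructor
      · rintro ⟨-, ⟨i, rfl⟩, h⟩
        rw [(D.exists_mark_eq_leafEdge i).1 h]
      · rintro rfl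
        exact ⟨Finset.mem_univ _, ⟨7, rfl⟩, D.j.succ, D.mark_j⟩
    refine (congrArg (fun s : Finset (Fin D.graph.nE) => s.val.map D.graph.w) this).trans ?_
    simp

/-- The marked floor diagram associated to star-shaped data. -/
def toMarkedFD : MarkedFD 6 0 4 (fun _ => 1) [1] [1] where
  G := D.graph
  m := D.marking
  fd := D.isFloorDiagram hM
  marking := D.isMarking hM

lemma multq_toMarkedFD : (D.toMarkedFD hM).multq = ∏ k, qInt (D.u k) ^ 2 := by
  have h2 : (D.toMarkedFD hM).EdgeMu2 = ({D.leafEdge 7} : Finset (Fin D.graph.nE)) := by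
    ext e
    refine Finset.mem_filter.trans (Iff.trans ?_ Finset.mem_singleton.symm)
    constructor
    · rintro ⟨-, he, h⟩
      obtain ⟨i, rfl⟩ := (D.infEdge_iff hM e).1 he
      rw [(D.exists_mark_eq_leafEdge i).1 h]
    · rintro rfl
      exact ⟨Finset.mem_univ _, (D.infEdge_iff hM _).2 ⟨7, rfl⟩, D.j.succ, D.mark_j⟩
  have h1 : (D.toMarkedFD hM).EdgeMu1 = ({D.leafEdge 6} : Finset (Fin D.graph.nE)) := by
    ext e
    refine Finset.mem_filter.trans (Iff.trans ?_ Finset.mem_singleton.symm)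
    constructor
    · rintro ⟨-, i, hi, v, hv, he⟩
      obtain rfl : i = (0 : Fin 5) := Fin.ext (by simpa using hi)
      obtain rfl : D.leaf 6 = v := Sum.inl.inj hv
      exact D.adj_leaf_iff.1 he
    · rintro rfl
      exact ⟨Finset.mem_univ _, (0 : Fin 5), by simp, D.leaf 6, rfl, D.adj_leaf_iff.2 rfl⟩
  have h0 : (∏ e ∈ (D.toMarkedFD hM).EdgeO, qInt ((D.toMarkedFD hM).G.w e) ^ 2) =
      ∏ k, qInt (D.u k) ^ 2 := by
    refine (Finset.prod_filter _ _).trans ((D.prod_edge _).trans ?_)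
    change (∏ i, if ¬ D.graph.InfEdge (D.leafEdge i) then
      qInt (D.graph.w (D.leafEdge i)) ^ 2 else 1) *
      (∏ k, if ¬ D.graph.InfEdge (D.innerEdge k) then
        qInt (D.graph.w (D.innerEdge k)) ^ 2 else 1) = _
    simp [D.infEdge_iff hM]
  rw [MarkedFD.multq, h0, h1, h2]
  change (∏ e ∈ ({D.leafEdge 7} : Finset (Fin D.graph.nE)),
      C ((D.graph.w e : ℚ)⁻¹) * qInt (D.graph.w e)) *
    (∏ e ∈ ({D.leafEdge 6} : Finset (Fin D.graph.nE)),
      C ((D.graph.w e : ℚ)⁻¹) * qInt (D.graph.w e)) *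
    (∏ e ∈ ({D.leafEdge 7} : Finset (Fin D.graph.nE)), C (D.graph.w e : ℚ)) * _ = _
  simp [qInt]

lemma eq_of_equivalent {D D' : StarDiagram n d M}
    (h : (D.toMarkedFD hM).Equivalent (D'.toMarkedFD hM)) : D.f = D'.f ∧ D.j = D'.j := by
  obtain ⟨φV, φE, ψ, hsrc, htgt, -, hψ, hψ', hm⟩ := h
  replace hsrc : ∀ e, D'.graph.src (φE e) = φV (D.graph.src e) := hsrc
  replace htgt : ∀ e, D'.graph.tgt (φE e) = φV (D.graph.tgt e) := htgt
  replace hm : ∀ p, D'.marking (ψ p) = Sum.map φV φE (D.marking p) := hm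
  have hA : ∀ p, D'.mark p = Sum.map φV φE (D.mark p) := fun p =>
    (congrArg D'.marking (hψ p)).symm.trans (hm (Sum.inl p))
  have hleaf : ∀ i : Fin 8, i ≠ 7 → φV (D.leaf i) = D'.leaf i := fun i h => by
    rcases eq_or_ne i 6 with rfl | h6
    · exact (Sum.inl.inj (hA 0)).symm
    have hi : (i : ℕ) < 6 := by
      revert i
      decide
    obtain ⟨p', hp'⟩ := hψ' ⟨i, hi⟩ 0
    have h1 := hm (Sum.inr ⟨⟨i, hi⟩, (0 : Fin 1)⟩)
    exact (Sum.inl.inj ((congrArg D'.marking hp').symm.trans h1)).symm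
  have hedge : ∀ i : Fin 8, i ≠ 7 → φE (D.leafEdge i) = D'.leafEdge i := fun i h => by
    have := hsrc (D.leafEdge i)
    rw [D.src_leafEdge] at this
    exact D'.adj_leaf_iff.1 (Or.inl (this.trans (hleaf i h)))
  have hj : D.j = D'.j := by
    by_contra hne
    obtain ⟨s, hs⟩ := Fin.exists_succAbove_eq hne
    have h1 := hA D.j.succ
    rw [← hs, mark_succAbove, hs, mark_j] at h1
    cases hMs : M s with
    | inl k =>
      rw [hMs] at h1
      exact Sum.inl_ne_inr h1
    | inr k =>
      rw [hMs] at h1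
      have h2 : D'.innerEdge k = φE (D.leafEdge 7) := Sum.inr.inj h1
      have h3 := hsrc (D.leafEdge 7)
      rw [← h2, D'.src_innerEdge, D.src_leafEdge] at h3
      have h4 : ∀ p, D'.mark p ≠ Sum.inl (D'.floor 0) := by
        refine fun p hp => (D.exists_marking_eq_leaf 7).1 ⟨Sum.inl p, ?_⟩ rfl
        rw [hA, h3] at hp
        exact (Sum.map_injective.2 ⟨φV.injective, φE.injective⟩) hp
      refine h4 (D'.j.succAbove 0).succ ?_
      rw [D'.mark_succAbove, hM.zero]
      rfl
  have hM' : ∀ s, Sum.map D'.floor D'.innerEdge (M s) =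
      Sum.map φV φE (Sum.map D.floor D.innerEdge (M s)) := fun s => by
    have h := hA (D.j.succAbove s).succ
    rwa [D.mark_succAbove, hj, D'.mark_succAbove] at h
  have hin : ∀ k, φE (D.innerEdge k) = D'.innerEdge k := fun k => by
    obtain ⟨s, hs⟩ := hM.edge_mem k
    have := hM' s
    rw [hs] at this
    exact (Sum.inr.inj this).symm
  have hfl : ∀ k, φV (D.floor k) = D'.floor k := fun k => by
    cases k using Fin.cases with
    | zero => 
      have := hM' 0
      rw [hM.zero] at this
      exact (Sum.inl.inj this).symm
    | succ k =>
      have := htgt (D.innerEdge k)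
      rw [hin, tgt_innerEdge, tgt_innerEdge] at this
      exact this.symm
  have h7 : φE (D.leafEdge 7) = D'.leafEdge 7 := by
    have := hA D.j.succ
    rw [mark_j, hj, mark_j] at this
    exact (Sum.inr.inj this).symm
  refine ⟨funext fun i => ?_, hj⟩
  have hi : φE (D.leafEdge i) = D'.leafEdge i := by
    rcases eq_or_ne i 7 with rfl | h
    · exact h7
    · exact hedge i h
  have := htgt (D.leafEdge i)
  rw [hi, tgt_leafEdge, tgt_leafEdge, hfl, floor_inj] at this
  exact this.symm

end StarDiagram

namespace MarkedFD

/-- The leaves `leaf i` and their adjacent edges `le i`, numbered in the order `E₁, …, E₆`, the leaf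
marked by the first element of `A₀`, the unmarked leaf; the mark of the edge adjacent to the
unmarked leaf is `j.succ`. -/
structure IsLeafNumbering (X : MarkedFD 6 0 4 (fun _ => 1) [1] [1]) (leaf : Fin 8 → Fin X.G.nV)
    (le : Fin 8 → Fin X.G.nE) (j : Fin 4) : Prop where
  inj : Function.Injective leaf
  infVert_iff : ∀ v, X.G.InfVert v ↔ ∃ i, leaf i = v
  src_eq : ∀ i, X.G.src (le i) = leaf i
  infEdge_iff : ∀ e, X.G.InfEdge e ↔ ∃ i, le i = e
  w_eq : ∀ i, X.G.w (le i) = 1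
  m_zero : X.m (Sum.inl (0 : Fin 5)) = Sum.inl (leaf 6)
  m_exc : ∀ i : Fin 6,
    X.m (Sum.inr ⟨i, (0 : Fin 1)⟩) = Sum.inl (leaf (i.castLE (by norm_num)))
  m_edge : X.m (Sum.inl (j.succ : Fin 5)) = Sum.inr (le 7)
  m_vert_ne : ∀ (p : Fin 4) (v), X.m (Sum.inl (p.succ : Fin 5)) = Sum.inl v → ¬ X.G.InfVert v
  m_edge_ne : ∀ (p : Fin 4) (e), X.m (Sum.inl (p.succ : Fin 5)) = Sum.inr e → X.G.InfEdge e → p = j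

lemma exists_isLeafNumbering (X : MarkedFD 6 0 4 (fun _ => 1) [1] [1]) :
    ∃ leaf le j, X.IsLeafNumbering leaf le j := by
  have hM := X.marking
  obtain ⟨ε, hε⟩ : ∃ ε, (Finset.univ.filter fun e => X.G.InfEdge e ∧
      ∃ i : Fin 5, X.m (Sum.inl i) = Sum.inr e) = {ε} :=
    Finset.card_eq_one.1 ((Multiset.card_map X.G.w _).symm.trans
      (congrArg Multiset.card hM.mu2_edges))
  have hmem : ∀ e, (X.G.InfEdge e ∧ ∃ i : Fin 5, X.m (Sum.inl i) = Sum.inr e) ↔ e = ε := fun e => by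
    simpa using Finset.ext_iff.1 hε e
  obtain ⟨hinf, i₀, hi₀⟩ := (hmem ε).2 rfl
  obtain ⟨v₀, hv₀, hm₀⟩ := (hM.mu1_vert (0 : Fin 5)).2 (by simp)
  have hvert : ∀ (p : Fin 4) (v), X.m (Sum.inl (p.succ : Fin 5)) = Sum.inl v → ¬ X.G.InfVert v :=
    fun p v hp hv => by simpa using (hM.mu1_vert (p.succ : Fin 5)).1 ⟨v, hv, hp⟩
  obtain ⟨j, rfl⟩ : ∃ j : Fin 4, i₀ = j.succ :=
    Fin.exists_succ_eq.2 (fun h => Sum.inl_ne_inr (hm₀.symm.trans (h ▸ hi₀))) |>.imp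
      fun _ h => h.symm
  let pt : Fin 8 → MarkDom 6 0 4 (fun _ => 1) [1].length [1].length := fun i =>
    if h : (i : ℕ) < 6 then Sum.inr ⟨⟨i, h⟩, (0 : Fin 1)⟩ else Sum.inl (0 : Fin 5)
  have hpt_lt : ∀ (i : Fin 8) (h : (i : ℕ) < 6), pt i = Sum.inr ⟨⟨i, h⟩, (0 : Fin 1)⟩ :=
    fun i h => dif_pos h
  have hpt_ge : ∀ i : Fin 8, ¬ (i : ℕ) < 6 → pt i = Sum.inl (0 : Fin 5) := fun i h => dif_neg h
  have hpt_inj : ∀ i i', i ≠ 7 → i' ≠ 7 → pt i = pt i' → i = i' := by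
    intro i i' hi hi' h
    by_cases h1 : (i : ℕ) < 6 <;> by_cases h2 : (i' : ℕ) < 6
    · rw [hpt_lt i h1, hpt_lt i' h2] at h
      exact Fin.ext (congrArg (fun q : Σ _ : Fin 6, Fin 1 => (q.1 : ℕ)) (Sum.inr.inj h))
    · exact (Sum.inr_ne_inl (((hpt_lt i h1).symm.trans h).trans (hpt_ge i' h2))).elim
    · exact (Sum.inl_ne_inr (((hpt_ge i h1).symm.trans h).trans (hpt_lt i' h2))).elim
    · omega
  have hex : ∀ i, ∃ v, X.G.InfVert v ∧ (i ≠ 7 → X.m (pt i) = Sum.inl v) ∧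
      (i = 7 → v = X.G.src ε) := by
    intro i
    by_cases h7 : i = 7
    · exact ⟨_, WOGraph.infEdge_iff.1 hinf, fun h => (h h7).elim, fun _ => rfl⟩
    by_cases h6 : (i : ℕ) < 6
    · obtain ⟨v, hv, hm⟩ := hM.exc_vert ⟨i, h6⟩ 0
      exact ⟨v, hv, fun _ => (congrArg X.m (hpt_lt i h6)).trans hm, fun h => (h7 h).elim⟩
    · exact ⟨v₀, hv₀, fun _ => (congrArg X.m (hpt_ge i h6)).trans hm₀, fun h => (h7 h).elim⟩
  choose leaf hleaf hm h7 using hex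
  choose le hsrc _ hadj using fun i => (hleaf i).exists_edge
  have hle7 : le 7 = ε := (hadj 7 ε (Or.inl (h7 7 rfl).symm)).symm
  have hne7 : ∀ i, i ≠ 7 → leaf i ≠ leaf 7 := fun i hi h => by
    rcases hM.inf_pair (leaf i) (hleaf i) ε (Or.inl (h.trans (h7 7 rfl)).symm)
      with ⟨_, h'⟩ | ⟨_, h'⟩
    · exact h' ⟨_, hi₀⟩
    · exact h' ⟨_, hm i hi⟩
  have hinj : Function.Injective leaf := by
    intro i i' h
    by_cases hi : i = 7
    · by_contra hne
      exact hne7 i' (fun h' => hne (hi.trans h'.symm)) (h.symm.trans (congrArg leaf hi))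
    by_cases hi' : i' = 7
    · exact (hne7 i hi (h.trans (congrArg leaf hi'))).elim
    · refine hpt_inj i i' hi hi' (hM.inj ?_)
      rw [hm i hi, hm i' hi', h]
  have hsurj : ∀ v, X.G.InfVert v ↔ ∃ i, leaf i = v := by
    refine fun v => ⟨fun hv => ?_, fun ⟨i, hi⟩ => hi ▸ hleaf i⟩
    obtain ⟨e, he, -, -⟩ := hv.exists_edge
    rcases hM.inf_pair v hv e (Or.inl he) with ⟨⟨p | ⟨i, p⟩, hp⟩, -⟩ | ⟨⟨p | ⟨i, p⟩, hp⟩, -⟩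
    · have hp0 : p = (0 : Fin 5) := Fin.ext (by simpa using (hM.mu1_vert p).1 ⟨v, hv, hp⟩)
      subst hp0
      exact ⟨6, Sum.inl.inj ((hm 6 (by decide)).symm.trans
        ((congrArg X.m (hpt_ge 6 (by decide))).trans hp))⟩
    · obtain rfl : p = (0 : Fin 1) := Subsingleton.elim _ _
      refine ⟨i.castLE (by norm_num), Sum.inl.inj ((hm _ ?_).symm.trans
        ((congrArg X.m (hpt_lt (i.castLE (by norm_num)) i.2)).trans hp))⟩
      exact fun h => by simpa using (congrArg Fin.val h).symm.trans_lt i.2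
    · obtain rfl := (hmem e).1 ⟨WOGraph.infEdge_iff.2 (he ▸ hv), p, hp⟩
      exact ⟨7, (h7 7 rfl).trans he⟩
    · obtain ⟨v', -, hv'⟩ := hM.exc_vert i p
      exact (Sum.inl_ne_inr (hv'.symm.trans hp)).elim
  refine ⟨leaf, le, j, hinj, hsurj, hsrc, fun e => ?_, ?_, ?_, fun i => ?_, ?_, hvert, ?_⟩
  · rw [WOGraph.infEdge_iff, hsurj]
    exact exists_congr fun i =>
      ⟨fun h => (hadj i e (Or.inl h.symm)).symm, fun h => h ▸ (hsrc i).symm⟩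
  · have htot := X.fd.total_div
    have hfilter : (Finset.univ.filter fun v => X.G.InfVert v) = Finset.univ.image leaf := by
      ext v
      simp [hsurj]
    rw [hfilter, Finset.sum_image hinj.injOn,
      Finset.sum_congr rfl fun i _ => (hleaf i).div_eq (hsrc i)] at htot
    have hpos : ∀ i ∈ Finset.univ, (1 : ℤ) ≤ X.G.w (le i) :=
      fun i _ => by exact_mod_cast X.G.w_pos (le i)
    have := (Finset.sum_eq_sum_iff_of_le hpos).1 (by simp at htot ⊢; omega)
    exact fun i => by exact_mod_cast (this i (Finset.mem_univ i)).symm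
  · exact (congrArg X.m (hpt_ge 6 (by decide))).symm.trans (hm 6 (by decide))
  · refine (congrArg X.m (hpt_lt (i.castLE (by norm_num)) i.2)).symm.trans (hm _ ?_)
    exact fun h => by simpa using (congrArg Fin.val h).symm.trans_lt i.2
  · rw [hle7]
    exact hi₀
  · intro p e hp he
    obtain rfl := (hmem e).1 ⟨he, _, hp⟩
    exact Fin.succ_injective _ (Sum.inl.inj (hM.inj (hp.trans hi₀.symm)))

/-- The floors `fl k` and the edges `ie k` between them form a star with centre `fl 0`, of
divergence `4`, whose outer floors have divergence `d`. -/
structure IsStarNumbering (X : MarkedFD 6 0 4 (fun _ => 1) [1] [1]) (d : ℕ) {n : ℕ}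
    (fl : Fin (n + 2) → Fin X.G.nV) (ie : Fin (n + 1) → Fin X.G.nE) : Prop where
  fl_inj : Function.Injective fl
  ie_inj : Function.Injective ie
  not_infVert_iff : ∀ v, ¬ X.G.InfVert v ↔ ∃ k, fl k = v
  not_infEdge_iff : ∀ e, ¬ X.G.InfEdge e ↔ ∃ k, ie k = e
  src_eq : ∀ k, X.G.src (ie k) = fl 0
  tgt_eq : ∀ k, X.G.tgt (ie k) = fl k.succ
  div_eq : ∀ k : Fin (n + 1), X.G.div (fl k.succ) = d

end MarkedFD

lemma Fin.append_bijective {α : Type*} {P : α → Prop} {a b : ℕ} {f : Fin a → α} {g : Fin b → α}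
    (hf : Function.Injective f) (hg : Function.Injective g) (hfP : ∀ x, P x ↔ ∃ i, f i = x)
    (hgP : ∀ x, ¬ P x ↔ ∃ i, g i = x) : Function.Bijective (Fin.append f g) := by
  refine ⟨Fin.append_injective_iff.2 ⟨hf, hg, fun i k h => ?_⟩, fun x => ?_⟩
  · exact (hgP (f i)).2 ⟨k, h.symm⟩ ((hfP _).2 ⟨i, rfl⟩)
  · by_cases hx : P x
    · obtain ⟨i, rfl⟩ := (hfP x).1 hx
      exact ⟨_, Fin.append_left f g i⟩
    · obtain ⟨i, rfl⟩ := (hgP x).1 hx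
      exact ⟨_, Fin.append_right f g i⟩

namespace StarDiagram

variable {n d : ℕ} {M : Fin 3 → Fin (n + 2) ⊕ Fin (n + 1)}

/-- A marked floor diagram whose vertices, edges and marks are arranged in a star is equivalent to
the one associated to star-shaped data. -/
lemma exists_equivalent (hM : IsStarTemplate n d M)
    {X : MarkedFD 6 0 4 (fun _ => 1) [1] [1]} {leaf : Fin 8 → Fin X.G.nV}
    {fl : Fin (n + 2) → Fin X.G.nV} {le : Fin 8 → Fin X.G.nE} {ie : Fin (n + 1) → Fin X.G.nE}
    {j : Fin 4} (hL : X.IsLeafNumbering leaf le j) (hS : X.IsStarNumbering d fl ie)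
    (hm : ∀ s, X.m (Sum.inl ((j.succAbove s).succ : Fin 5)) = Sum.map fl ie (M s)) :
    ∃ D : StarDiagram n d M, (D.toMarkedFD hM).Equivalent X := by
  have hV := Fin.append_bijective hL.inj hS.fl_inj hL.infVert_iff hS.not_infVert_iff
  have hle : Function.Injective le := fun i i' h =>
    hL.inj (by rw [← hL.src_eq, ← hL.src_eq, h])
  have hE := Fin.append_bijective hle hS.ie_inj hL.infEdge_iff hS.not_infEdge_iff
  have hne : ∀ i k, leaf i ≠ fl k := fun i k h =>
    (hS.not_infVert_iff _).2 ⟨k, h.symm⟩ ((hL.infVert_iff _).2 ⟨i, rfl⟩)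
  have htgt : ∀ i, ∃ k, fl k = X.G.tgt (le i) := fun i =>
    (hS.not_infVert_iff _).1 (X.fd.acyclic.not_infVert_tgt (le i))
  choose f hf using htgt
  have hsum : ∀ F : Fin X.G.nE → ℤ, ∑ e, F e = ∑ i, F (le i) + ∑ k, F (ie k) := fun F => by
    rw [← hE.sum_comp, Fin.sum_univ_add]
    simp
  let D : StarDiagram n d M :=
    { f := f
      u := fun k => X.G.w (ie k)
      j := j
      u_pos := fun k => X.G.w_pos _
      u_add := fun k => by
        have h := hS.div_eq k
        rw [WOGraph.div_eq_sum, hsum, hsum] at h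
        simp [← hf, hL.w_eq, hL.src_eq, hS.src_eq, hS.tgt_eq, hS.fl_inj.eq_iff, hne,
          (Fin.succ_ne_zero k).symm] at h
        rw [add_comm]
        exact_mod_cast h
      lt_succAbove := fun s hs => by
        refine Fin.succ_lt_succ_iff.1 (X.marking.incr j.succ (j.succAbove s).succ ?_)
        rw [hL.m_edge, hm, hs]
        exact .single (hf 7).symm }
  let φV : Fin D.graph.nV ≃ Fin X.G.nV := Equiv.ofBijective _ hV
  let φE : Fin D.graph.nE ≃ Fin X.G.nE := Equiv.ofBijective _ hE
  have hVl : ∀ i, φV (D.leaf i) = leaf i := Fin.append_left leaf fl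
  have hVf : ∀ k, φV (D.floor k) = fl k := Fin.append_right leaf fl
  have hEl : ∀ i, φE (D.leafEdge i) = le i := Fin.append_left le ie
  have hEi : ∀ k, φE (D.innerEdge k) = ie k := Fin.append_right le ie
  refine ⟨D, φV, φE, Equiv.refl _, ?_, ?_, ?_, fun _ => rfl, fun i p => ⟨p, rfl⟩, ?_⟩
  · change ∀ e, X.G.src (φE e) = φV (D.graph.src e)
    simp [D.forall_edge, hVl, hVf, hEl, hEi, hL.src_eq, hS.src_eq]
  · change ∀ e, X.G.tgt (φE e) = φV (D.graph.tgt e)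
    simp [D.forall_edge, hVf, hEl, hEi, hf, hS.tgt_eq, D]
  · change ∀ e, X.G.w (φE e) = D.graph.w e
    simp [D.forall_edge, hEl, hEi, hL.w_eq, D]
  · rintro (p | ⟨i, p⟩)
    · change X.m (Sum.inl p) = Sum.map φV φE (D.mark p)
      revert p
      refine D.forall_mark.2 ⟨?_, ?_, fun s => ?_⟩
      · rw [D.mark_zero, Sum.map_inl, hVl]
        exact hL.m_zero
      · rw [D.mark_j, Sum.map_inr, hEl]
        exact hL.m_edge
      · rw [D.mark_succAbove, Sum.map_map, funext (f := φV ∘ D.floor) hVf,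
          funext (f := φE ∘ D.innerEdge) hEi]
        exact hm s
    · change X.m (Sum.inr ⟨i, p⟩) = Sum.map φV φE (D.excMark ⟨i, p⟩)
      rw [Subsingleton.elim p 0, excMark, Sum.map_inl, hVl]
      exact hL.m_exc i

end StarDiagram

namespace MarkedFD

variable {X : MarkedFD 6 0 4 (fun _ => 1) [1] [1]} {leaf : Fin 8 → Fin X.G.nV}
  {le : Fin 8 → Fin X.G.nE} {j : Fin 4}

lemma IsLeafNumbering.card_floor (hL : X.IsLeafNumbering leaf le j) :
    (Finset.univ.filter fun v => ¬ X.G.InfVert v).card =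
      (Finset.univ.filter fun e => ¬ X.G.InfEdge e).card + 1 := by
  have hle : Function.Injective le := fun i i' h =>
    hL.inj (by rw [← hL.src_eq, ← hL.src_eq, h])
  have hV : (Finset.univ.filter fun v => X.G.InfVert v) = Finset.univ.image leaf := by
    ext v
    simp [hL.infVert_iff]
  have hE : (Finset.univ.filter fun e => X.G.InfEdge e) = Finset.univ.image le := by
    ext e
    simp [hL.infEdge_iff]
  have h1 := Finset.card_filter_add_card_filter_not (s := Finset.univ) fun v => X.G.InfVert v
  have h2 := Finset.card_filter_add_card_filter_not (s := Finset.univ) fun e => X.G.InfEdge e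
  have h3 := X.fd.betti
  rw [hV, Finset.card_image_of_injective _ hL.inj] at h1
  rw [hE, Finset.card_image_of_injective _ hle] at h2
  simp only [Finset.card_univ, Fintype.card_fin] at h1 h2
  omega

lemma sum_div_floor (X : MarkedFD 6 0 4 (fun _ => 1) [1] [1]) :
    ∑ v ∈ Finset.univ.filter (fun v => ¬ X.G.InfVert v), X.G.div v = 8 := by
  have h1 := Finset.sum_filter_add_sum_filter_not Finset.univ (fun v => X.G.InfVert v) X.G.div
  rw [X.G.sum_div, X.fd.total_div] at h1
  push_cast at h1
  linarith

lemma div_src_eq_four {e : Fin X.G.nE} (he : ¬ X.G.InfEdge e) : X.G.div (X.G.src e) = 4 := by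
  rw [WOGraph.infEdge_iff] at he
  refine (X.fd.div_floor _ he).resolve_left fun h => ?_
  exact X.fd.acyclic.src_ne_tgt e (X.fd.sink_of_two _ he h e (Or.inl rfl)).symm

/-- A floor of divergence `2` is the target of an edge starting at a floor, if there is another
floor. -/
lemma exists_tgt_eq {v v' : Fin X.G.nV} (hv : ¬ X.G.InfVert v) (hv' : ¬ X.G.InfVert v')
    (hne : v ≠ v') (hdiv : X.G.div v = 2) : ∃ e, ¬ X.G.InfEdge e ∧ X.G.tgt e = v := by
  by_contra! hno
  have hsink := X.fd.sink_of_two v hv hdiv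
  have key : ∀ u, Relation.ReflTransGen X.G.connStep v u →
      u = v ∨ ∃ e, X.G.tgt e = v ∧ X.G.src e = u := by
    intro u hu
    induction hu with
    | refl => exact Or.inl rfl
    | tail _ hstep ih =>
      obtain ⟨e', h⟩ := hstep
      rcases ih with rfl | ⟨e, he, rfl⟩
      · rcases h with ⟨h1, h2⟩ | ⟨h1, h2⟩
        · exact Or.inl (h2.symm.trans (hsink e' (Or.inl h1)))
        · exact Or.inr ⟨e', h2, h1⟩
      · have hinf : X.G.InfVert (X.G.src e) :=
          WOGraph.infEdge_iff.1 (not_not.1 fun h => hno e h he)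
        obtain ⟨e₀, -, -, h₀⟩ := hinf.exists_edge
        have hee : e' = e :=
          (h₀ e' (h.imp And.left And.right)).trans (h₀ e (Or.inl rfl)).symm
        subst hee
        rcases h with ⟨-, h2⟩ | ⟨h1, -⟩
        · exact Or.inl (h2.symm.trans he)
        · exact Or.inr ⟨e', he, h1⟩
  rcases key v' (X.fd.conn.2 v v') with h | ⟨e, he, hs⟩
  · exact hne h.symm
  · exact hno e (fun h => hv' (hs ▸ WOGraph.infEdge_iff.1 h)) he

lemma IsLeafNumbering.exists_isStarNumbering (hL : X.IsLeafNumbering leaf le j) :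
    (∃ (fl : Fin (0 + 2) → Fin X.G.nV) (ie : Fin (0 + 1) → Fin X.G.nE),
      X.IsStarNumbering 4 fl ie) ∨
    ∃ (fl : Fin (1 + 2) → Fin X.G.nV) (ie : Fin (1 + 1) → Fin X.G.nE),
      X.IsStarNumbering 2 fl ie := by
  set Fl := Finset.univ.filter fun v => ¬ X.G.InfVert v with hFl
  set Ed := Finset.univ.filter fun e => ¬ X.G.InfEdge e with hEd
  have hmF : ∀ v, v ∈ Fl ↔ ¬ X.G.InfVert v := by simp [hFl]
  have hmE : ∀ e, e ∈ Ed ↔ ¬ X.G.InfEdge e := by simp [hEd]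
  have hcard : Fl.card = Ed.card + 1 := hL.card_floor
  have hsum : ∑ v ∈ Fl, X.G.div v = 8 := X.sum_div_floor
  have hdiv : ∀ v ∈ Fl, X.G.div v = 2 ∨ X.G.div v = 4 :=
    fun v hv => X.fd.div_floor v ((hmF v).1 hv)
  have hEd_ne : Ed.Nonempty := by
    by_contra h
    rw [Finset.not_nonempty_iff_eq_empty.1 h, Finset.card_empty, Finset.card_eq_one] at hcard
    obtain ⟨v, hv⟩ := hcard
    have := hdiv v (by simp [hv])
    rw [hv, Finset.sum_singleton] at hsum
    omega
  obtain ⟨e, he⟩ := hEd_ne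
  have hsF : ∀ e ∈ Ed, X.G.src e ∈ Fl := fun e he =>
    (hmF _).2 (WOGraph.infEdge_iff.not.1 ((hmE e).1 he))
  have htF : ∀ e, X.G.tgt e ∈ Fl := fun e => (hmF _).2 (X.fd.acyclic.not_infVert_tgt e)
  have hs4 : ∀ e ∈ Ed, X.G.div (X.G.src e) = 4 := fun e he => div_src_eq_four ((hmE e).1 he)
  have hst := X.fd.acyclic.src_ne_tgt
  set R := (Fl.erase (X.G.src e)).erase (X.G.tgt e) with hR
  have ht' : X.G.tgt e ∈ Fl.erase (X.G.src e) := Finset.mem_erase.2 ⟨(hst e).symm, htF e⟩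
  have hRsum : ∑ v ∈ R, X.G.div v = 4 - X.G.div (X.G.tgt e) := by
    have h1 := Finset.add_sum_erase Fl X.G.div (hsF e he)
    have h2 := Finset.add_sum_erase _ X.G.div ht'
    have h3 := hs4 e he
    rw [hR]
    omega
  have hRcard : R.card + 1 = Ed.card := by
    have h1 := Finset.card_erase_add_one (hsF e he)
    have h2 : R.card + 1 = _ := Finset.card_erase_add_one ht'
    omega
  have hRle : R.card * 2 ≤ 4 - X.G.div (X.G.tgt e) := by
    rw [← hRsum, ← nsmul_eq_mul]
    exact Finset.card_nsmul_le_sum R _ _ fun v hv => by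
      rcases hdiv v (Finset.mem_of_mem_erase (Finset.mem_of_mem_erase hv)) with h | h <;> omega
  have hFmem : ∀ v, v ∈ Fl ↔ v = X.G.src e ∨ v = X.G.tgt e ∨ v ∈ R := fun v => by
    have := hsF e he
    have := htF e
    simp only [hR, Finset.mem_erase]
    grind
  rcases hdiv _ (htF e) with h2 | h4
  · right
    have hR1 : R.card = 1 := by
      have : R.card ≠ 0 := fun h => by
        rw [Finset.card_eq_zero.1 h, Finset.sum_empty] at hRsum
        omega
      omega
    obtain ⟨v, hv⟩ := Finset.card_eq_one.1 hR1
    rw [hv, Finset.sum_singleton] at hRsum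
    have hvR : v ∈ R := by simp [hv]
    have hvF : v ∈ Fl := (hFmem v).2 (Or.inr (Or.inr hvR))
    obtain ⟨hv1, hv2, -⟩ : v ≠ X.G.tgt e ∧ v ≠ X.G.src e ∧ v ∈ Fl := by
      simpa [hR] using hvR
    obtain ⟨e', he', rfl⟩ := exists_tgt_eq ((hmF v).1 hvF) ((hmF _).1 (hsF e he)) hv2 (by omega)
    have he'E := (hmE e').2 he'
    have hee' : e ≠ e' := fun h => hv1 (h ▸ rfl)
    have hEd2 : Ed = {e, e'} := by
      refine (Finset.eq_of_subset_of_card_le ?_ ?_).symm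
      · simp [Finset.insert_subset_iff, he, he'E]
      · rw [Finset.card_pair hee']
        omega
    have hsrc : X.G.src e' = X.G.src e := by
      have h4 := hs4 e' he'E
      rcases (hFmem _).1 (hsF e' he'E) with h | h | h
      · exact h
      · rw [h] at h4
        omega
      · rw [hv, Finset.mem_singleton] at h
        exact (hst e' h).elim
    refine ⟨![X.G.src e, X.G.tgt e, X.G.tgt e'], ![e, e'], ?_, ?_, ?_, ?_, ?_, ?_, ?_⟩
    · simp [Function.Injective, Fin.forall_fin_succ, hst, hv1, hv1.symm, hv2, (hst e).symm,
        hv2.symm]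
    · simp [Function.Injective, Fin.forall_fin_succ, hee', hee'.symm]
    · intro v
      rw [← hmF, hFmem, hv]
      simp [Fin.exists_fin_succ, eq_comm]
    · intro e₁
      rw [← hmE, hEd2]
      simp [Fin.exists_fin_succ, eq_comm]
    · simp [Fin.forall_fin_succ, hsrc]
    · simp [Fin.forall_fin_succ]
    · simp [Fin.forall_fin_succ, h2]
      omega
  · left
    have hR0 : R.card = 0 := by omega
    have hEd1 : Ed = {e} := by
      refine (Finset.eq_of_subset_of_card_le ?_ ?_).symm
      · simp [he]
      · simp
        omega
    refine ⟨![X.G.src e, X.G.tgt e], ![e], ?_, ?_, ?_, ?_, ?_, ?_, ?_⟩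
    · simp [Function.Injective, Fin.forall_fin_succ, hst, (hst e).symm]
    · simp [Function.Injective, Fin.forall_fin_succ]
    · intro v
      rw [← hmF, hFmem, Finset.card_eq_zero.1 hR0]
      simp [Fin.exists_fin_succ, eq_comm]
    · intro e₁
      rw [← hmE, hEd1]
      simp [eq_comm]
    · simp
    · simp
    · simp [h4]

end MarkedFD

lemma MarkedFD.IsStarNumbering.exists_perm {n d : ℕ} {M : Fin 3 → Fin (n + 2) ⊕ Fin (n + 1)}
    {X : MarkedFD 6 0 4 (fun _ => 1) [1] [1]} {leaf : Fin 8 → Fin X.G.nV}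
    {le : Fin 8 → Fin X.G.nE} {fl : Fin (n + 2) → Fin X.G.nV} {ie : Fin (n + 1) → Fin X.G.nE}
    {j : Fin 4} (hS : X.IsStarNumbering d fl ie) (hL : X.IsLeafNumbering leaf le j)
    (hM : IsStarTemplate n d M) :
    ∃ σ : Fin 3 → Fin 3, Function.Injective σ ∧
      (∀ s, X.m (Sum.inl ((j.succAbove s).succ : Fin 5)) = Sum.map fl ie (M (σ s))) ∧
      (∀ s s' k, M (σ s) = Sum.inl 0 → M (σ s') = Sum.inr k → s < s') ∧
      ∀ s s' k, M (σ s) = Sum.inr k → M (σ s') = Sum.inl k.succ → s < s' := by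
  have hex : ∀ s, ∃ t, X.m (Sum.inl ((j.succAbove s).succ : Fin 5)) = Sum.map fl ie (M t) := by
    intro s
    rcases hx : X.m (Sum.inl ((j.succAbove s).succ : Fin 5)) with v | e
    · obtain ⟨k, rfl⟩ := (hS.not_infVert_iff v).1 (hL.m_vert_ne _ _ hx)
      cases k using Fin.cases with
      | zero => exact ⟨0, by rw [hM.zero]; rfl⟩
      | succ k =>
        rcases hM.div_eq with hd | hd
        · refine (X.marking.no_floor_one _ ((hS.not_infVert_iff _).2 ⟨_, rfl⟩) ?_ _ hx).elim
          rw [hS.div_eq, hd]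
          rfl
        · obtain ⟨t, ht⟩ := hM.outer_mem k.succ hd
          exact ⟨t, by rw [ht]; rfl⟩
    · obtain ⟨k, rfl⟩ := (hS.not_infEdge_iff e).1
        fun h => Fin.succAbove_ne _ _ (hL.m_edge_ne _ _ hx h)
      obtain ⟨t, ht⟩ := hM.edge_mem k
      exact ⟨t, by rw [ht]; rfl⟩
  choose σ hσ using hex
  have hlt : ∀ s s', Relation.TransGen X.G.veStep (Sum.map fl ie (M (σ s)))
      (Sum.map fl ie (M (σ s'))) → s < s' := fun s s' h => by
    rw [← hσ, ← hσ] at h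
    exact (j.strictMono_succAbove.lt_iff_lt).1
      (Fin.succ_lt_succ_iff.1 (X.marking.incr (j.succAbove s).succ (j.succAbove s').succ h))
  refine ⟨σ, fun s s' h => ?_, hσ, fun s s' k h h' => hlt s s' ?_, fun s s' k h h' => hlt s s' ?_⟩
  · have h1 : X.m (Sum.inl ((j.succAbove s).succ : Fin 5)) =
        X.m (Sum.inl ((j.succAbove s').succ : Fin 5)) := by rw [hσ, hσ, h]
    exact Fin.succAbove_right_injective
      (Fin.succ_injective _ (Sum.inl.inj (X.marking.inj h1)))
  · rw [h, h']
    exact .single (hS.src_eq k)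
  · rw [h, h']
    exact .single (hS.tgt_eq k)

lemma MarkedFD.IsStarNumbering.swap {X : MarkedFD 6 0 4 (fun _ => 1) [1] [1]} {d : ℕ}
    {fl : Fin (1 + 2) → Fin X.G.nV} {ie : Fin (1 + 1) → Fin X.G.nE}
    (hS : X.IsStarNumbering d fl ie) :
    X.IsStarNumbering d (fl ∘ Equiv.swap 1 2) (ie ∘ Equiv.swap 0 1) := by
  have h : ∀ k : Fin (1 + 1), (Equiv.swap 0 1 k).succ = Equiv.swap 1 2 k.succ := by decide
  refine ⟨hS.fl_inj.comp (Equiv.injective _), hS.ie_inj.comp (Equiv.injective _),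
    fun v => ?_, fun e => ?_, fun k => ?_, fun k => ?_, fun k => ?_⟩
  · rw [hS.not_infVert_iff, ← (Equiv.swap (1 : Fin (1 + 2)) 2).exists_congr_right]
    rfl
  · rw [hS.not_infEdge_iff, ← (Equiv.swap (0 : Fin (1 + 1)) 1).exists_congr_right]
    rfl
  · exact hS.src_eq _
  · rw [Function.comp_apply, Function.comp_apply, ← h]
    exact hS.tgt_eq _
  · rw [Function.comp_apply, ← h]
    exact hS.div_eq _

/-- Marked objects of a star with one outer floor. -/
def oneStarMarks : Fin 3 → Fin (0 + 2) ⊕ Fin (0 + 1) := ![Sum.inl 0, Sum.inr 0, Sum.inl 1]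

/-- Marked objects of a star with two outer floors. -/
def twoStarMarks : Fin 3 → Fin (1 + 2) ⊕ Fin (1 + 1) := ![Sum.inl 0, Sum.inr 0, Sum.inr 1]

lemma isStarTemplate_one : IsStarTemplate 0 4 oneStarMarks where
  inj := by decide
  zero := rfl
  edge_mem := by decide
  edge_lt := by decide
  outer_mem := by decide
  floor_mem := by decide
  div_eq := by decide
  mul_eq := by decide

lemma isStarTemplate_two : IsStarTemplate 1 2 twoStarMarks where
  inj := by decide
  zero := rfl
  edge_mem := by decide
  edge_lt := by decide
  outer_mem := by decide
  floor_mem := by decide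
  div_eq := by decide
  mul_eq := by decide

lemma MarkedFD.exists_equivalent_star (X : MarkedFD 6 0 4 (fun _ => 1) [1] [1]) :
    (∃ D : StarDiagram 0 4 oneStarMarks, (D.toMarkedFD isStarTemplate_one).Equivalent X) ∨
    ∃ D : StarDiagram 1 2 twoStarMarks, (D.toMarkedFD isStarTemplate_two).Equivalent X := by
  obtain ⟨leaf, le, j, hL⟩ := X.exists_isLeafNumbering
  rcases hL.exists_isStarNumbering with ⟨fl, ie, hS⟩ | ⟨fl, ie, hS⟩
  · left
    obtain ⟨σ, hσ, hm, h1, h2⟩ := hS.exists_perm hL isStarTemplate_one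
    have : ∀ s, σ s = s := by
      clear hm
      revert σ
      decide
    exact StarDiagram.exists_equivalent _ hL hS fun s => by rw [hm, this]
  · right
    obtain ⟨σ, hσ, hm, h1, -⟩ := hS.exists_perm hL isStarTemplate_two
    have : (∀ s, σ s = s) ∨ ∀ s, σ s = Equiv.swap 1 2 s := by
      clear hm
      revert σ
      decide
    rcases this with h | h
    · exact StarDiagram.exists_equivalent _ hL hS fun s => by rw [hm, h]
    · refine StarDiagram.exists_equivalent _ hL hS.swap fun s => ?_
      have hswap : ∀ s, Sum.map (Equiv.swap 1 2) (Equiv.swap 0 1) (twoStarMarks s) =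
          twoStarMarks (Equiv.swap 1 2 s) := by decide
      rw [hm, h, ← hswap, Sum.map_map]

/-- The attachment map `f` of the leaves and the mark `j` of the infinite edge are those of
star-shaped data. -/
def IsStarCode (n d : ℕ) (M : Fin 3 → Fin (n + 2) ⊕ Fin (n + 1)) (f : Fin 8 → Fin (n + 2))
    (j : Fin 4) : Prop :=
  (∀ k : Fin (n + 1), (Finset.univ.filter fun i => f i = k.succ).card < d) ∧
    ∀ s, M s = Sum.inl (f 7) → j < j.succAbove s

instance (n d : ℕ) (M : Fin 3 → Fin (n + 2) ⊕ Fin (n + 1)) (f : Fin 8 → Fin (n + 2)) (j : Fin 4) :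
    Decidable (IsStarCode n d M f j) :=
  inferInstanceAs (Decidable (_ ∧ _))

/-- The weight of the `k`-th inner edge of the star-shaped data with attachment map `f`. -/
def starWeight {n : ℕ} (d : ℕ) (f : Fin 8 → Fin (n + 2)) (k : Fin (n + 1)) : ℕ :=
  d - (Finset.univ.filter fun i => f i = k.succ).card

namespace StarDiagram

variable {n d : ℕ} {M : Fin 3 → Fin (n + 2) ⊕ Fin (n + 1)}

lemma isStarCode (D : StarDiagram n d M) : IsStarCode n d M D.f D.j :=
  ⟨fun k => by
    have h1 := D.u_pos k
    have h2 := D.u_add k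
    omega, D.lt_succAbove⟩

lemma u_eq (D : StarDiagram n d M) : D.u = starWeight d D.f :=
  funext fun k => Nat.eq_sub_of_add_eq (D.u_add k)

lemma ext_code {D D' : StarDiagram n d M} (hf : D.f = D'.f) (hj : D.j = D'.j) : D = D' := by
  have hu : D.u = D'.u := by rw [u_eq, u_eq, hf]
  cases D
  cases D'
  simp_all

/-- Star-shaped data are determined by the attachment map and the mark of the infinite edge. -/
def equivCode : StarDiagram n d M ≃
    {c : (Fin 8 → Fin (n + 2)) × Fin 4 // IsStarCode n d M c.1 c.2} where
  toFun D := ⟨(D.f, D.j), D.isStarCode⟩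
  invFun c :=
    { f := c.1.1
      u := starWeight d c.1.1
      j := c.1.2
      u_pos := fun k => Nat.sub_pos_of_lt (c.2.1 k)
      u_add := fun k => Nat.sub_add_cancel (c.2.1 k).le
      lt_succAbove := c.2.2 }
  left_inv _ := ext_code rfl rfl
  right_inv _ := rfl

instance : Fintype (StarDiagram n d M) := Fintype.ofEquiv _ equivCode.symm

lemma sum_multq (hM : IsStarTemplate n d M) : ∑ D : StarDiagram n d M, (D.toMarkedFD hM).multq =
    ∑ c ∈ Finset.univ.filter (fun c : (Fin 8 → Fin (n + 2)) × Fin 4 =>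
      IsStarCode n d M c.1 c.2), ∏ k, qInt (starWeight d c.1 k) ^ 2 := by
  rw [Finset.sum_subtype (p := fun c : (Fin 8 → Fin (n + 2)) × Fin 4 => IsStarCode n d M c.1 c.2)
    _ (by simp), ← equivCode.sum_comp]
  refine Finset.sum_congr rfl fun D _ => ?_
  rw [multq_toMarkedFD, u_eq]
  rfl

lemma sum_multq_one : ∑ D : StarDiagram 0 4 oneStarMarks,
    (D.toMarkedFD isStarTemplate_one).multq =
      qInt 4 ^ 2 + 10 * qInt 3 ^ 2 + 42 * qInt 2 ^ 2 + 98 := by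
  rw [sum_multq]
  refine (Finset.sum_congr rfl fun c _ => Fin.prod_univ_one _).trans ?_
  rw [Finset.sum_comp (fun w => qInt w ^ 2)
    fun c : (Fin 8 → Fin (0 + 2)) × Fin 4 => starWeight 4 c.1 0]
  set s := Finset.univ.filter fun c : (Fin 8 → Fin (0 + 2)) × Fin 4 =>
    IsStarCode 0 4 oneStarMarks c.1 c.2 with hs
  have himage : s.image (fun c => starWeight 4 c.1 0) = {4, 3, 2, 1} := by
    decide +kernel
  have h4 : (s.filter fun c => starWeight 4 c.1 0 = 4).card = 1 := by decide +kernel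
  have h3 : (s.filter fun c => starWeight 4 c.1 0 = 3).card = 10 := by decide +kernel
  have h2 : (s.filter fun c => starWeight 4 c.1 0 = 2).card = 42 := by decide +kernel
  have h1 : (s.filter fun c => starWeight 4 c.1 0 = 1).card = 98 := by decide +kernel
  have hq : qInt 1 = 1 := by simp [qInt]
  rw [himage, Finset.sum_insert (by decide), Finset.sum_insert (by decide),
    Finset.sum_insert (by decide), Finset.sum_singleton, h4, h3, h2, h1, hq]
  simp only [nsmul_eq_mul]
  push_cast
  ring

/-- The attachment map of a star with two outer floors, each of which is adjacent to at most one
leaf. -/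
def attach (x : Option (Fin 8) × Option (Fin 8)) (i : Fin 8) : Fin (1 + 2) :=
  if x.1 = some i then 1 else if x.2 = some i then 2 else 0

lemma attach_eq {x : Option (Fin 8) × Option (Fin 8)} {i : Fin 8} {k : Fin (1 + 2)}
    (h₁ : x.1 = some i ↔ k = Fin.succ 0) (h₂ : x.2 = some i ↔ k = Fin.succ 1) :
    attach x i = k := by
  have hk : k = 0 ∨ k = Fin.succ 0 ∨ k = Fin.succ 1 := by
    clear h₁ h₂
    revert k
    decide
  rw [attach]
  split_ifs with h h'
  · exact (h₁.1 h).symm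
  · exact (h₂.1 h').symm
  · exact (hk.resolve_right (by rw [← h₁, ← h₂]; tauto)).symm

lemma attach_eq_one {x : Option (Fin 8) × Option (Fin 8)} {i : Fin 8} :
    attach x i = 1 ↔ x.1 = some i := by
  rw [attach]
  split_ifs <;> simp_all

lemma attach_eq_two {x : Option (Fin 8) × Option (Fin 8)} (hx : x.1 = x.2 → x.1 = none)
    {i : Fin 8} : attach x i = 2 ↔ x.2 = some i := by
  rw [attach]
  split_ifs with h h'
  · have : x.2 ≠ some i := fun h' => by simp_all
    simp only [this, iff_false]
    decide
  · simp [h']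
  · simp only [h', iff_false]
    decide

lemma sum_multq_two : ∑ D : StarDiagram 1 2 twoStarMarks,
    (D.toMarkedFD isStarTemplate_two).multq = qInt 2 ^ 4 + 22 * qInt 2 ^ 2 + 98 := by
  rw [sum_multq]
  set s := Finset.univ.filter fun y : (Option (Fin 8) × Option (Fin 8)) × Fin 4 =>
    (y.1.1 = y.1.2 → y.1.1 = none) ∧ IsStarCode 1 2 twoStarMarks (attach y.1) y.2 with hs
  have hone : ∀ t : Finset (Fin 8), t.card < 2 →
      ∃ o : Option (Fin 8), ∀ i, o = some i ↔ i ∈ t := by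
    intro t ht
    rcases t.eq_empty_or_nonempty with rfl | h
    · exact ⟨none, by simp⟩
    · obtain ⟨a, rfl⟩ := Finset.card_eq_one.1 (le_antisymm (Nat.le_of_lt_succ ht) h.card_pos)
      exact ⟨some a, by simp [eq_comm]⟩
  have hmem : ∀ y, y ∈ s ↔
      (y.1.1 = y.1.2 → y.1.1 = none) ∧ IsStarCode 1 2 twoStarMarks (attach y.1) y.2 := by
    intro y
    rw [hs, Finset.mem_filter, and_iff_right (Finset.mem_univ _)]
  have hsum : ∑ y ∈ s, ∏ k, qInt (starWeight 2 (attach y.1) k) ^ 2 =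
      ∑ c ∈ Finset.univ.filter (fun c : (Fin 8 → Fin (1 + 2)) × Fin 4 =>
        IsStarCode 1 2 twoStarMarks c.1 c.2), ∏ k, qInt (starWeight 2 c.1 k) ^ 2 := by
    clear_value s
    refine Finset.sum_bij (fun y _ => (attach y.1, y.2)) ?_ ?_ ?_ fun _ _ => rfl
    · intro y hy
      rw [Finset.mem_filter_univ]
      rw [hmem] at hy
      exact hy.2
    · rintro ⟨⟨x₁, x₂⟩, j⟩ hy ⟨⟨y₁, y₂⟩, j'⟩ hy' h
      rw [hmem] at hy hy'
      obtain ⟨hf, rfl⟩ := Prod.mk.inj h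
      have h₁ : x₁ = y₁ := Option.ext fun i => by
        have := congrArg (· = 1) (congrFun hf i)
        rwa [eq_iff_iff, attach_eq_one, attach_eq_one] at this
      have h₂ : x₂ = y₂ := Option.ext fun i => by
        have := congrArg (· = 2) (congrFun hf i)
        rwa [eq_iff_iff, attach_eq_two hy.1, attach_eq_two hy'.1] at this
      rw [h₁, h₂]
    · simp only [Finset.mem_filter_univ]
      rintro ⟨f, j⟩ hc
      obtain ⟨x₁, h₁⟩ := hone _ (hc.1 0)
      obtain ⟨x₂, h₂⟩ := hone _ (hc.1 1)
      have hf : attach (x₁, x₂) = f := by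
        funext i
        have h₁i := h₁ i
        have h₂i := h₂ i
        rw [Finset.mem_filter, and_iff_right (Finset.mem_univ _)] at h₁i h₂i
        exact attach_eq h₁i h₂i
      refine ⟨((x₁, x₂), j), (hmem _).2 ⟨fun h => ?_, hf.symm ▸ hc⟩, Prod.ext hf rfl⟩
      by_contra hne
      obtain ⟨i, hi⟩ := Option.ne_none_iff_exists'.1 hne
      have a₁ := (Finset.mem_filter.1 ((h₁ i).1 hi)).2
      have a₂ := (Finset.mem_filter.1 ((h₂ i).1 (h.symm.trans hi))).2
      exact absurd (a₁.symm.trans a₂) (by decide)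
  rw [← hsum]
  refine (Finset.sum_congr rfl fun c _ => Fin.prod_univ_two _).trans ?_
  rw [Finset.sum_comp (fun w : ℕ × ℕ => qInt w.1 ^ 2 * qInt w.2 ^ 2)
    fun y : (Option (Fin 8) × Option (Fin 8)) × Fin 4 =>
      (starWeight 2 (attach y.1) 0, starWeight 2 (attach y.1) 1)]
  have himage : s.image (fun y => (starWeight 2 (attach y.1) 0, starWeight 2 (attach y.1) 1)) =
      {(2, 2), (1, 2), (2, 1), (1, 1)} := by
    decide +kernel
  have h22 : (s.filter fun y =>
    (starWeight 2 (attach y.1) 0, starWeight 2 (attach y.1) 1) = (2, 2)).card = 1 := by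
    decide +kernel
  have h12 : (s.filter fun y =>
    (starWeight 2 (attach y.1) 0, starWeight 2 (attach y.1) 1) = (1, 2)).card = 11 := by
    decide +kernel
  have h21 : (s.filter fun y =>
    (starWeight 2 (attach y.1) 0, starWeight 2 (attach y.1) 1) = (2, 1)).card = 11 := by
    decide +kernel
  have h11 : (s.filter fun y =>
    (starWeight 2 (attach y.1) 0, starWeight 2 (attach y.1) 1) = (1, 1)).card = 98 := by
    decide +kernel
  have hq : qInt 1 = 1 := by simp [qInt]
  rw [himage, Finset.sum_insert (by decide), Finset.sum_insert (by decide),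
    Finset.sum_insert (by decide), Finset.sum_singleton, h22, h12, h21, h11, hq]
  simp only [nsmul_eq_mul]
  push_cast
  ring

end StarDiagram

/-- The marked floor diagrams of star-shaped data with one or two outer floors. -/
def starRep : StarDiagram 0 4 oneStarMarks ⊕ StarDiagram 1 2 twoStarMarks →
    MarkedFD 6 0 4 (fun _ => 1) [1] [1] :=
  Sum.elim (fun D => D.toMarkedFD isStarTemplate_one) fun D => D.toMarkedFD isStarTemplate_two

lemma eq_of_starRep_equivalent {D D' : StarDiagram 0 4 oneStarMarks ⊕ StarDiagram 1 2 twoStarMarks}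
    (h : (starRep D).Equivalent (starRep D')) : D = D' := by
  rcases D with D | D <;> rcases D' with D' | D'
  · obtain ⟨hf, hj⟩ := StarDiagram.eq_of_equivalent isStarTemplate_one h
    rw [StarDiagram.ext_code hf hj]
  · obtain ⟨e, -⟩ := h
    have : 10 = 11 := Fin.equiv_iff_eq.1 ⟨e⟩
    omega
  · obtain ⟨e, -⟩ := h
    have : 11 = 10 := Fin.equiv_iff_eq.1 ⟨e⟩
    omega
  · obtain ⟨hf, hj⟩ := StarDiagram.eq_of_equivalent isStarTemplate_two h
    rw [StarDiagram.ext_code hf hj]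

/-- In `X₆'` (`k = 6`), for the class `d = 4[L] − Σ_{i=1}^6 [E_i]`
(so `a = 4`, `bᵢ = 1` for all `i`, and `d·[E] = 2`), the refined count of `d`-marked
floor diagrams of genus `0` and type `((1),(1))` is
`N_q^{(1),(1)} = [2]_q⁴ + [4]_q² + 10[3]_q² + 64[2]_q² + 196`. -/
theorem refined_count_4L_type_1_1 :
    IsRefinedCount 6 0 4 (fun _ => 1) [1] [1]
      (qInt 2 ^ 4 + qInt 4 ^ 2 + 10 * qInt 3 ^ 2 + 64 * qInt 2 ^ 2 + 196) := by
  refine ⟨_, inferInstance, starRep, fun X => ?_, ?_⟩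
  · obtain ⟨D, hD⟩ : ∃ D, (starRep D).Equivalent X := by
      rcases X.exists_equivalent_star with ⟨D, hD⟩ | ⟨D, hD⟩
      exacts [⟨Sum.inl D, hD⟩, ⟨Sum.inr D, hD⟩]
    exact ⟨D, hD.symm, fun D' hD' => (eq_of_starRep_equivalent (hD.trans hD')).symm⟩
  · simp only [Fintype.sum_sum_type, starRep, Sum.elim_inl, Sum.elim_inr]
    rw [StarDiagram.sum_multq_one, StarDiagram.sum_multq_two]
    ring
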